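/- arXiv:math-ph/0102029 — 2 statements merged into one kernel-verified Lean document; each statement's English description precedes it below -/
import Mathlib

section
/- Let q1 and q2 be continuous real-valued potentials on [0,1] such that q1(x) = q2(x) for all x ∈ [1/2,1]. If q1 and q2 have the same set of Dirichlet eigenvalues, then q1 = q2 on all of [0,1]. -/
/-- `lam` is a Dirichlet eigenvalue of `q` on `[0,1]`: there is a nontrivial C²
solution of `-ψ'' + q ψ = lam ψ` with `ψ 0 = ψ 1 = 0`. -/
def IsDirichletEigenvalue (q : ℝ → ℝ) (lam : ℝ) : Prop :=
  ∃ ψ ψ' : ℝ → ℝ,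
    (∀ x ∈ Set.Icc (0:ℝ) 1, HasDerivAt ψ (ψ' x) x) ∧
    (∀ x ∈ Set.Icc (0:ℝ) 1, HasDerivAt ψ' (q x * ψ x - lam * ψ x) x) ∧
    (∃ x ∈ Set.Icc (0:ℝ) 1, ψ x ≠ 0) ∧ ψ 0 = 0 ∧ ψ 1 = 0

open Set Filter Topology

namespace HL

lemma isUnit_abs {E : Type} [NormedAddCommGroup E] [NormedSpace ℂ E] [CompleteSpace E]
    (A : E →L[ℂ] E) (n : ℕ) (hn : ‖A ^ n‖ < 1) : IsUnit (1 - A) := by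
  have hu : IsUnit (1 - A ^ n) := isUnit_one_sub_of_norm_lt_one hn
  rw [← mul_neg_geom_sum] at hu
  refine ((Commute.isUnit_mul_iff ?_).1 hu).1
  show _ * _ = _ * _
  rw [mul_neg_geom_sum, geom_sum_mul_neg]

lemma diff_abs {E : Type} [NormedAddCommGroup E] [NormedSpace ℂ E] [CompleteSpace E]
    (A B : E →L[ℂ] E) (h : ∀ l : ℂ, IsUnit (1 - (A - l • B))) (x : E) :
    Differentiable ℂ (fun l : ℂ => Ring.inverse (1 - (A - l • B)) x) := by
  intro l
  have h0 : DifferentiableAt ℂ (fun l : ℂ => 1 - (A - l • B)) l := by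
    fun_prop
  have h1 : DifferentiableAt ℂ (fun l : ℂ => Ring.inverse (1 - (A - l • B))) l :=
    DifferentiableAt.comp (g := Ring.inverse) l (differentiableAt_inverse (𝕜 := ℂ) (h l)) h0
  exact h1.clm_apply (differentiableAt_const _)

/-- Continuous complex functions on the unit interval. -/
abbrev CI : Type := C(Icc (0:ℝ) 1, ℂ)

/-- Extension of a continuous function on the unit interval to the real line. -/
noncomputable def ext (u : CI) : ℝ → ℂ := IccExtend zero_le_one u

lemma ext_cont (u : CI) : Continuous (ext u) := u.continuous.Icc_extend'

lemma ext_int (u : CI) (a b : ℝ) : IntervalIntegrable (ext u) MeasureTheory.volume a b :=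
  (ext_cont u).intervalIntegrable a b

lemma ext_of_mem (u : CI) {x : ℝ} (hx : x ∈ Icc (0:ℝ) 1) : ext u x = u ⟨x, hx⟩ :=
  IccExtend_of_mem _ _ hx

lemma ext_add (u v : CI) (x : ℝ) : ext (u + v) x = ext u x + ext v x := rfl
lemma ext_smul (c : ℂ) (v : CI) (x : ℝ) : ext (c • v) x = c * ext v x := rfl
lemma ext_mul (u v : CI) (x : ℝ) : ext (u * v) x = ext u x * ext v x := rfl
lemma ext_norm (u : CI) (x : ℝ) : ‖ext u x‖ ≤ ‖u‖ := u.norm_coe_le_norm _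

lemma prim_cont (f : ℝ → ℂ) (hf : Continuous f) : Continuous (fun x : ℝ => ∫ t in (0:ℝ)..x, f t) :=
  continuous_iff_continuousAt.2 fun x =>
    (hf.integral_hasStrictDerivAt 0 x).hasDerivAt.continuousAt

/-- Volterra operator as a linear map. -/
noncomputable def Vlin : CI →ₗ[ℂ] CI where
  toFun u := ⟨fun x => ∫ t in (0:ℝ)..x, ext u t, (prim_cont _ (ext_cont u)).comp continuous_subtype_val⟩
  map_add' u v := by
    ext x
    simp only [ext_add, ContinuousMap.coe_mk, ContinuousMap.add_apply]
    exact intervalIntegral.integral_add (ext_int u _ _) (ext_int v _ _)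
  map_smul' c u := by
    ext x
    simp only [ext_smul, ContinuousMap.coe_mk, ContinuousMap.smul_apply, RingHom.id_apply, smul_eq_mul]
    exact intervalIntegral.integral_const_mul _ _

/-- Volterra operator. -/
noncomputable def V : CI →L[ℂ] CI := Vlin.mkContinuous 1 (by
  intro u
  rw [ContinuousMap.norm_le _ (by positivity)]
  intro x
  have h := intervalIntegral.norm_integral_le_of_norm_le_const (a := 0) (b := (x:ℝ)) (f := ext u)
    (C := ‖u‖) (fun t _ => ext_norm u t)
  refine h.trans ?_
  have h0 := x.2.1
  have h1 := x.2.2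
  rw [sub_zero, abs_of_nonneg h0]
  nlinarith [norm_nonneg u])

lemma V_apply (u : CI) (x : Icc (0:ℝ) 1) : V u x = ∫ t in (0:ℝ)..x, ext u t := rfl

lemma ext_V (u : CI) {x : ℝ} (hx : x ∈ Icc (0:ℝ) 1) : ext (V u) x = ∫ t in (0:ℝ)..x, ext u t := by
  rw [ext_of_mem _ hx, V_apply]

lemma V_bound (w : CI) (A : ℝ) (n : ℕ) (h : ∀ x : Icc (0:ℝ) 1, ‖w x‖ ≤ A * (x:ℝ) ^ n)
    (x : Icc (0:ℝ) 1) : ‖V w x‖ ≤ A / (n + 1) * (x:ℝ) ^ (n + 1) := by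
  rw [V_apply]
  have h0 := x.2.1
  have h1 := x.2.2
  have := intervalIntegral.norm_integral_le_of_norm_le (μ := MeasureTheory.volume) (a := 0) (b := (x:ℝ)) (f := ext w)
    (g := fun t => A * t ^ n) h0 (Eventually.of_forall fun t ht => by
      have ht' : t ∈ Icc (0:ℝ) 1 := ⟨ht.1.le, ht.2.trans h1⟩
      rw [ext_of_mem _ ht']
      exact h ⟨t, ht'⟩) (by apply Continuous.intervalIntegrable; fun_prop)
  refine this.trans (le_of_eq ?_)
  rw [intervalIntegral.integral_const_mul, integral_pow]
  simp
  ring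

/-- The Volterra operator of the Sturm–Liouville problem. -/
noncomputable def T (m : CI) : CI →L[ℂ] CI := V ∘L V ∘L (ContinuousLinearMap.mul ℂ CI m)

lemma T_apply (m u : CI) : T m u = V (V (m * u)) := rfl

lemma T_bound (m w : CI) (A : ℝ) (hA : 0 ≤ A) (n : ℕ) (h : ∀ x : Icc (0:ℝ) 1, ‖w x‖ ≤ A * (x:ℝ) ^ n)
    (x : Icc (0:ℝ) 1) : ‖T m w x‖ ≤ ‖m‖ * A / (n + 1) * (x:ℝ) ^ (n + 1) := by
  rw [T_apply]
  have e1 : ∀ x : Icc (0:ℝ) 1, ‖(m * w) x‖ ≤ (‖m‖ * A) * (x:ℝ) ^ n := by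
    intro x
    rw [ContinuousMap.mul_apply, norm_mul, mul_assoc]
    exact mul_le_mul (m.norm_coe_le_norm x) (h x) (norm_nonneg _) (norm_nonneg _)
  have e2 := V_bound _ _ _ (V_bound _ _ _ e1) x
  refine e2.trans ?_
  have h0 := x.2.1
  have h1 := x.2.2
  have hb : 0 ≤ ‖m‖ * A / (n + 1) := by positivity
  have : (x:ℝ) ^ (n + 1 + 1) ≤ (x:ℝ) ^ (n+1) := pow_le_pow_of_le_one h0 h1 (by omega)
  apply mul_le_mul _ this (by positivity) hb
  apply div_le_self hb
  push_cast
  linarith [(Nat.cast_nonneg n : (0:ℝ) ≤ n)]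

lemma T_pow_bound (m u : CI) (n : ℕ) (x : Icc (0:ℝ) 1) :
    ‖((T m) ^ n) u x‖ ≤ ‖m‖ ^ n * ‖u‖ / n.factorial * (x:ℝ) ^ n := by
  induction n generalizing x with
  | zero => simpa using u.norm_coe_le_norm x
  | succ n ih =>
    rw [pow_succ']
    have := T_bound m (((T m) ^ n) u) _ (by positivity) n ih x
    refine this.trans (le_of_eq ?_)
    rw [Nat.factorial_succ]
    push_cast
    rw [pow_succ' ‖m‖]
    field_simp

lemma isUnit_one_sub_T (m : CI) : IsUnit (1 - T m) := by
  have ht := FloorSemiring.tendsto_pow_div_factorial_atTop (‖m‖)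
  obtain ⟨n, hn⟩ := (ht.eventually (gt_mem_nhds (show (0:ℝ) < 1 by norm_num))).exists
  have hnorm : ‖(T m) ^ n‖ < 1 := by
    refine lt_of_le_of_lt ?_ hn
    apply ContinuousLinearMap.opNorm_le_bound _ (by positivity)
    intro u
    rw [ContinuousMap.norm_le _ (by positivity)]
    intro x
    refine (T_pow_bound m u n x).trans ?_
    have h0 := x.2.1
    have h1 := x.2.2
    have : (x:ℝ) ^ n ≤ 1 := pow_le_one₀ h0 h1
    calc _ ≤ ‖m‖ ^ n * ‖u‖ / n.factorial * 1 := by gcongr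
      _ = _ := by ring
  exact isUnit_abs _ n hnorm

/-- A potential as an element of `CI`. -/
noncomputable def qC (Q : ℝ → ℝ) (hQ : Continuous Q) : CI := ⟨fun x => (Q x : ℂ), by fun_prop⟩

/-- `u l` is the solution of `u'' = (Q - l) u` on `[0,1]` with `u 0 = a`, `u' 0 = b`,
depending analytically on `l`. -/
structure Sol (Q : ℝ → ℝ) (a b : ℂ) (u u' : ℂ → ℝ → ℂ) : Prop where
  val0 : ∀ l, u l 0 = a
  der0 : ∀ l, u' l 0 = b
  der : ∀ l x, HasDerivAt (u l) (u' l x) x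
  der' : ∀ l, ∀ x ∈ Icc (0:ℝ) 1, HasDerivAt (u' l) ((Q x - l) * u l x) x
  diff : ∀ x ∈ Icc (0:ℝ) 1, Differentiable ℂ (fun l => u l x)
  diff' : ∀ x ∈ Icc (0:ℝ) 1, Differentiable ℂ (fun l => u' l x)
  cont' : ∀ l, Continuous (u' l)
  contInt : ∀ g : ℝ → ℂ, Continuous g → Continuous (fun l => ∫ x in (0:ℝ)..1, u l x * g x)

lemma Sol.cont {Q : ℝ → ℝ} {a b : ℂ} {u u' : ℂ → ℝ → ℂ} (h : Sol Q a b u u') (l : ℂ) :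
    Continuous (u l) := continuous_iff_continuousAt.2 fun x => (h.der l x).continuousAt

theorem exists_sol (Q : ℝ → ℝ) (hQ : Continuous Q) (a b : ℂ) : ∃ u u', Sol Q a b u u' := by
  let m : ℂ → CI := fun l => qC Q hQ - l • 1
  let U : ℂ → CI := fun l => Ring.inverse (1 - T (m l)) (a • 1 + b • V 1)
  have hm : Differentiable ℂ m := by fun_prop
  have hT : ∀ l, T (m l) = T (qC Q hQ) - l • T 1 := by
    intro l
    ext1 u
    simp only [T_apply, m, sub_mul, map_sub, smul_mul_assoc, map_smul, sub_apply, smul_apply]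
  have hU : Differentiable ℂ U := by
    have := diff_abs (T (qC Q hQ)) (T 1)
      (fun l => by rw [← hT l]; exact isUnit_one_sub_T (m l)) (a • 1 + b • V 1)
    simpa only [← hT] using this
  have hUeq : ∀ l, U l = a • 1 + V (b • 1 + V (m l * U l)) := by
    intro l
    have h1 : (1 - T (m l)) (U l) = a • 1 + b • V 1 := by
      have := Ring.mul_inverse_cancel _ (isUnit_one_sub_T (m l))
      have := congrArg (fun A : CI →L[ℂ] CI => A (a • 1 + b • V 1)) this
      exact this
    have h2 : U l - V (V (m l * U l)) = a • 1 + b • V 1 := h1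
    rw [map_add, map_smul, ← add_assoc, ← h2]
    abel
  let W : ℂ → CI := fun l => b • 1 + V (m l * U l)
  have hW : Differentiable ℂ W := by
    have : Differentiable ℂ (fun l => m l * U l) := hm.mul hU
    exact (differentiable_const _).add (V.differentiable.comp this)
  let v' : ℂ → ℝ → ℂ := fun l x => b + ∫ t in (0:ℝ)..x, ext (m l * U l) t
  let v : ℂ → ℝ → ℂ := fun l x => a + ∫ t in (0:ℝ)..x, v' l t
  have hv'W : ∀ l, ∀ x, ∀ hx : x ∈ Icc (0:ℝ) 1, v' l x = W l ⟨x, hx⟩ := by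
    intro l x hx
    simp only [v', W, ContinuousMap.add_apply, ContinuousMap.smul_apply, ContinuousMap.one_apply,
      V_apply, smul_eq_mul, mul_one]
  have hvU : ∀ l, ∀ x, ∀ hx : x ∈ Icc (0:ℝ) 1, v l x = U l ⟨x, hx⟩ := by
    intro l x hx
    rw [hUeq l]
    simp only [v, ContinuousMap.add_apply, ContinuousMap.smul_apply, ContinuousMap.one_apply,
      V_apply, smul_eq_mul, mul_one]
    congr 1
    apply intervalIntegral.integral_congr
    intro t ht
    rw [uIcc_of_le hx.1] at ht
    have ht' : t ∈ Icc (0:ℝ) 1 := ⟨ht.1, ht.2.trans hx.2⟩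
    show v' l t = ext (W l) t
    rw [hv'W l t ht', ext_of_mem _ ht']
  have hc' : ∀ l, Continuous (v' l) := fun l => continuous_const.add (prim_cont _ (ext_cont _))
  have hev : ∀ (G : ℂ → CI), Differentiable ℂ G → ∀ x, Differentiable ℂ (fun l => G l x) := by
    intro G hG x
    exact (ContinuousMap.evalCLM ℂ x : CI →L[ℂ] ℂ).differentiable.comp hG
  refine ⟨v, v', ?_, ?_, ?_, ?_, ?_, ?_, hc', ?_⟩
  · intro l; simp [v]
  · intro l; simp [v']
  · intro l x
    exact ((hc' l).integral_hasStrictDerivAt 0 x).hasDerivAt.const_add a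
  · intro l x hx
    have := ((ext_cont (m l * U l)).integral_hasStrictDerivAt 0 x).hasDerivAt.const_add b
    have e : ((Q x : ℂ) - l) * v l x = ext (m l * U l) x := by
      rw [ext_of_mem _ hx, hvU l x hx]
      simp [m, qC]
    rw [e]
    exact this
  · intro x hx
    simpa only [hvU _ x hx] using hev U hU ⟨x, hx⟩
  · intro x hx
    simpa only [hv'W _ x hx] using hev W hW ⟨x, hx⟩
  · intro g hg
    let G : CI := ⟨fun x => g x, by fun_prop⟩
    have h1 : Continuous (fun l => V (U l * G) ⟨1, by norm_num⟩) := by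
      refine (hev (fun l => V (U l * G)) ?_ _).continuous
      exact V.differentiable.comp (hU.mul (differentiable_const _))
    convert h1 using 2 with l
    rw [V_apply]
    apply intervalIntegral.integral_congr
    intro t ht
    rw [uIcc_of_le zero_le_one] at ht
    simp only [ext_of_mem _ ht, hvU l t ht, ContinuousMap.mul_apply]
    rfl

lemma green {a b : ℝ} (hab : a ≤ b) {p r u u' v v' : ℝ → ℂ}
    (hp : ContinuousOn p (Icc a b)) (hr : ContinuousOn r (Icc a b))
    (hu : ∀ x ∈ Icc a b, HasDerivAt u (u' x) x) (hu' : ∀ x ∈ Icc a b, HasDerivAt u' (p x * u x) x)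
    (hv : ∀ x ∈ Icc a b, HasDerivAt v (v' x) x) (hv' : ∀ x ∈ Icc a b, HasDerivAt v' (r x * v x) x) :
    ∫ x in a..b, (r x - p x) * (u x * v x) =
      (u b * v' b - u' b * v b) - (u a * v' a - u' a * v a) := by
  have hcu : ContinuousOn u (Icc a b) := fun x hx => (hu x hx).continuousAt.continuousWithinAt
  have hcv : ContinuousOn v (Icc a b) := fun x hx => (hv x hx).continuousAt.continuousWithinAt
  have := intervalIntegral.integral_eq_sub_of_hasDerivAt (a := a) (b := b)
    (f := fun x => u x * v' x - u' x * v x) (f' := fun x => (r x - p x) * (u x * v x)) (by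
      intro x hx
      rw [uIcc_of_le hab] at hx
      have h := ((hu x hx).mul (hv' x hx)).sub ((hu' x hx).mul (hv x hx))
      refine h.congr_deriv ?_
      ring) (by
      apply ContinuousOn.intervalIntegrable
      rw [uIcc_of_le hab]
      exact (hr.sub hp).mul (hcu.mul hcv))
  exact this

lemma wronskian {a b : ℝ} (hab : a ≤ b) {p u u' v v' : ℝ → ℂ}
    (hp : ContinuousOn p (Icc a b))
    (hu : ∀ x ∈ Icc a b, HasDerivAt u (u' x) x) (hu' : ∀ x ∈ Icc a b, HasDerivAt u' (p x * u x) x)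
    (hv : ∀ x ∈ Icc a b, HasDerivAt v (v' x) x) (hv' : ∀ x ∈ Icc a b, HasDerivAt v' (p x * v x) x) :
    u b * v' b - u' b * v b = u a * v' a - u' a * v a := by
  have := green hab hp hp hu hu' hv hv'
  simp only [sub_self, zero_mul, intervalIntegral.integral_zero] at this
  exact (sub_eq_zero.1 this.symm)

lemma pot_cont {Q : ℝ → ℝ} (hQ : Continuous Q) (l : ℂ) : Continuous (fun x : ℝ => (Q x : ℂ) - l) := by
  fun_prop

/-- Representation of every solution by the fundamental system. -/
lemma represent {Q : ℝ → ℝ} (hQ : Continuous Q) {c c' s s' : ℂ → ℝ → ℂ}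
    (hc : Sol Q 1 0 c c') (hs : Sol Q 0 1 s s') (l : ℂ) {b : ℝ} (hb : b ∈ Icc (0:ℝ) 1)
    {u u' : ℝ → ℂ} (hu : ∀ x ∈ Icc 0 b, HasDerivAt u (u' x) x)
    (hu' : ∀ x ∈ Icc 0 b, HasDerivAt u' (((Q x : ℂ) - l) * u x) x) :
    u b = u 0 * c l b + u' 0 * s l b := by
  have hsub : ∀ x ∈ Icc 0 b, x ∈ Icc (0:ℝ) 1 := fun x hx => ⟨hx.1, hx.2.trans hb.2⟩
  have hp : ContinuousOn (fun x : ℝ => (Q x : ℂ) - l) (Icc 0 b) := (pot_cont hQ l).continuousOn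
  have w1 := wronskian hb.1 hp hu hu' (fun x _ => hs.der l x) (fun x hx => hs.der' l x (hsub x hx))
  have w2 := wronskian hb.1 hp hu hu' (fun x _ => hc.der l x) (fun x hx => hc.der' l x (hsub x hx))
  have w3 := wronskian hb.1 hp (fun x _ => hc.der l x) (fun x hx => hc.der' l x (hsub x hx))
    (fun x _ => hs.der l x) (fun x hx => hs.der' l x (hsub x hx))
  rw [hs.val0, hs.der0] at w1
  rw [hc.val0, hc.der0] at w2
  rw [hs.val0, hs.der0, hc.val0, hc.der0] at w3
  linear_combination (-u b) * w3 + c l b * w1 - s l b * w2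

lemma norm_sin_le (z : ℂ) : ‖Complex.sin z‖ ≤ Real.exp |z.im| := by
  rw [Complex.sin, norm_div, norm_mul, Complex.norm_I, mul_one]
  have h1 : ‖Complex.exp (-z * Complex.I)‖ ≤ Real.exp |z.im| := by
    rw [Complex.norm_exp]; simp [le_abs_self]
  have h2 : ‖Complex.exp (z * Complex.I)‖ ≤ Real.exp |z.im| := by
    rw [Complex.norm_exp]; simp [neg_le_abs]
  have := norm_sub_le (Complex.exp (-z * Complex.I)) (Complex.exp (z * Complex.I))
  have h3 : ‖(2:ℂ)‖ = 2 := by norm_num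
  rw [h3]
  linarith

lemma norm_sin_mul_le (k : ℂ) (y : ℝ) (hy : 0 ≤ y) :
    ‖Complex.sin (k * y)‖ ≤ Real.exp (|k.im| * y) := by
  refine (norm_sin_le _).trans (le_of_eq ?_)
  simp [abs_mul, abs_of_nonneg hy]

lemma duhamel {Q : ℝ → ℝ} (hQ : Continuous Q) {s s' : ℂ → ℝ → ℂ} (hs : Sol Q 0 1 s s')
    (k : ℂ) (hk : k ≠ 0) {x : ℝ} (hx : x ∈ Icc (0:ℝ) 1) :
    ∫ t in (0:ℝ)..x, Complex.sin (k * ((x - t : ℝ) : ℂ)) / k * (Q t * s (k ^ 2) t) =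
      s (k ^ 2) x - Complex.sin (k * x) / k := by
  have hcs := hs.cont (k ^ 2)
  have := intervalIntegral.integral_eq_sub_of_hasDerivAt (a := 0) (b := x)
    (f := fun t => Complex.sin (k * ((x - t : ℝ) : ℂ)) / k * s' (k ^ 2) t
      + Complex.cos (k * ((x - t : ℝ) : ℂ)) * s (k ^ 2) t)
    (f' := fun t => Complex.sin (k * ((x - t : ℝ) : ℂ)) / k * (Q t * s (k ^ 2) t)) (by
      intro t ht
      rw [uIcc_of_le hx.1] at ht
      have ht' : t ∈ Icc (0:ℝ) 1 := ⟨ht.1, ht.2.trans hx.2⟩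
      have e0 : HasDerivAt (fun t : ℝ => k * ((x - t : ℝ) : ℂ)) (-k) t := by
        have h1 : HasDerivAt (fun t : ℝ => x - t) (-1) t := by
          simpa using (hasDerivAt_id t).const_sub x
        have h2 := (h1.ofReal_comp).const_mul k
        refine h2.congr_deriv ?_
        simp
      have e1 := (((Complex.hasDerivAt_sin _).comp t e0).div_const k).mul (hs.der' (k ^ 2) t ht')
      have e2 := ((Complex.hasDerivAt_cos _).comp t e0).mul (hs.der (k ^ 2) t)
      refine (e1.add e2).congr_deriv ?_
      simp only [Function.comp]
      field_simp
      ring) (by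
      apply Continuous.intervalIntegrable
      fun_prop)
  rw [this]
  simp [hs.val0, hs.der0]

lemma sol_bound_aux {Q : ℝ → ℝ} (hQ : Continuous Q) {s s' : ℂ → ℝ → ℂ} (hs : Sol Q 0 1 s s')
    {M : ℝ} (hM : ∀ x ∈ Icc (0:ℝ) 1, |Q x| ≤ M) (k : ℂ) (hk : k ≠ 0) {A : ℝ}
    (hA : ∀ t ∈ Icc (0:ℝ) 1, ‖s (k ^ 2) t‖ ≤ A * Real.exp (|k.im| * t)) {x : ℝ}
    (hx : x ∈ Icc (0:ℝ) 1) :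
    ‖s (k ^ 2) x - Complex.sin (k * x) / k‖ ≤ M * A / ‖k‖ * Real.exp (|k.im| * x) := by
  rw [← duhamel hQ hs k hk hx]
  have hM0 : 0 ≤ M := (abs_nonneg _).trans (hM x hx)
  have hA0 : 0 ≤ A := by
    have := (norm_nonneg _).trans (hA x hx)
    exact nonneg_of_mul_nonneg_left this (Real.exp_pos _)
  have hk' : 0 < ‖k‖ := norm_pos_iff.2 hk
  have h := intervalIntegral.norm_integral_le_of_norm_le_const (a := 0) (b := x)
    (f := fun t => Complex.sin (k * ((x - t : ℝ) : ℂ)) / k * (Q t * s (k ^ 2) t))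
    (C := M * A / ‖k‖ * Real.exp (|k.im| * x)) (by
      intro t ht
      rw [uIoc_of_le hx.1] at ht
      have ht' : t ∈ Icc (0:ℝ) 1 := ⟨ht.1.le, ht.2.trans hx.2⟩
      rw [norm_mul, norm_div, norm_mul, Complex.norm_real, Real.norm_eq_abs]
      have h1 := norm_sin_mul_le k (x - t) (by linarith [ht.2])
      calc _ ≤ Real.exp (|k.im| * (x - t)) / ‖k‖ * (M * (A * Real.exp (|k.im| * t))) := by
            gcongr
            · exact hM t ht'
            · exact hA t ht'
        _ = M * A / ‖k‖ * (Real.exp (|k.im| * (x - t)) * Real.exp (|k.im| * t)) := by ring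
        _ = _ := by rw [← Real.exp_add]; ring_nf)
  refine h.trans ?_
  rw [sub_zero, abs_of_nonneg hx.1]
  have : 0 ≤ M * A / ‖k‖ * Real.exp (|k.im| * x) := by positivity
  nlinarith [hx.2]

lemma sol_bound {Q : ℝ → ℝ} (hQ : Continuous Q) {s s' : ℂ → ℝ → ℂ} (hs : Sol Q 0 1 s s')
    {M : ℝ} (hM : ∀ x ∈ Icc (0:ℝ) 1, |Q x| ≤ M) (k : ℂ) (hk : k ≠ 0) (hkM : 2 * M ≤ ‖k‖) {x : ℝ}
    (hx : x ∈ Icc (0:ℝ) 1) :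
    ‖s (k ^ 2) x‖ ≤ 2 / ‖k‖ * Real.exp (|k.im| * x) := by
  have hk' : 0 < ‖k‖ := norm_pos_iff.2 hk
  have hcs := hs.cont (k ^ 2)
  obtain ⟨x0, hx0, hmax⟩ := isCompact_Icc.exists_isMaxOn (nonempty_Icc.2 (zero_le_one (α := ℝ)))
    (f := fun t => ‖s (k ^ 2) t‖ * Real.exp (-(|k.im| * t))) (by fun_prop)
  set A := ‖s (k ^ 2) x0‖ * Real.exp (-(|k.im| * x0)) with hAdef
  have hA0 : 0 ≤ A := by positivity
  have hA : ∀ t ∈ Icc (0:ℝ) 1, ‖s (k ^ 2) t‖ ≤ A * Real.exp (|k.im| * t) := by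
    intro t ht
    have h1 : ‖s (k ^ 2) t‖ * Real.exp (-(|k.im| * t)) ≤ A := hmax ht
    rw [Real.exp_neg, ← div_eq_mul_inv, div_le_iff₀ (Real.exp_pos _)] at h1
    exact h1
  have hAeq : ‖s (k ^ 2) x0‖ = A * Real.exp (|k.im| * x0) := by
    rw [hAdef, mul_assoc, ← Real.exp_add]; simp
  have h1 := sol_bound_aux hQ hs hM k hk hA hx0
  have h2 : ‖Complex.sin (k * x0) / k‖ ≤ Real.exp (|k.im| * x0) / ‖k‖ := by
    rw [norm_div]; gcongr; exact norm_sin_mul_le k x0 hx0.1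
  have h3 : ‖s (k ^ 2) x0‖ ≤ (M * A / ‖k‖ + 1 / ‖k‖) * Real.exp (|k.im| * x0) := by
    have := norm_add_le (s (k ^ 2) x0 - Complex.sin (k * x0) / k) (Complex.sin (k * x0) / k)
    rw [sub_add_cancel] at this
    refine (this.trans (add_le_add h1 h2)).trans (le_of_eq ?_)
    ring
  rw [hAeq] at h3
  have h4 := le_of_mul_le_mul_right h3 (Real.exp_pos _)
  have h5 : A ≤ 2 / ‖k‖ := by
    rw [← add_div, le_div_iff₀ hk'] at h4
    rw [le_div_iff₀ hk']
    nlinarith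
  refine (hA x hx).trans ?_
  gcongr

lemma sol_asymp {Q : ℝ → ℝ} (hQ : Continuous Q) {s s' : ℂ → ℝ → ℂ} (hs : Sol Q 0 1 s s')
    {M : ℝ} (hM : ∀ x ∈ Icc (0:ℝ) 1, |Q x| ≤ M) (k : ℂ) (hk : k ≠ 0) (hkM : 2 * M ≤ ‖k‖) {x : ℝ}
    (hx : x ∈ Icc (0:ℝ) 1) :
    ‖s (k ^ 2) x - Complex.sin (k * x) / k‖ ≤ M * (2 / ‖k‖) / ‖k‖ * Real.exp (|k.im| * x) :=
  sol_bound_aux hQ hs hM k hk (fun _ ht => sol_bound hQ hs hM k hk hkM ht) hx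

lemma sin_lower (n : ℕ) (hn : 1 ≤ n) (z : ℂ) (hz : ‖z‖ = (n + 1 / 2) * Real.pi) :
    Real.exp |z.im| / 8 ≤ ‖Complex.sin z‖ := by
  by_cases hb : 1 ≤ |z.im|
  · have h0 : Real.exp |z.im| / 2 - Real.exp (-|z.im|) / 2 ≤ ‖Complex.sin z‖ := by
      rw [Complex.sin, norm_div, norm_mul, Complex.norm_I, mul_one]
      have h1 : ‖Complex.exp (-z * Complex.I)‖ = Real.exp z.im := by
        rw [Complex.norm_exp]; simp
      have h2 : ‖Complex.exp (z * Complex.I)‖ = Real.exp (-z.im) := by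
        rw [Complex.norm_exp]; simp
      have h3 : ‖(2:ℂ)‖ = 2 := by norm_num
      have h4 := abs_norm_sub_norm_le (Complex.exp (-z * Complex.I)) (Complex.exp (z * Complex.I))
      rw [h1, h2] at h4
      rw [h3]
      have h5 := (le_abs_self _).trans h4
      have h6 := (neg_le_abs _).trans h4
      rcases abs_cases z.im with ⟨h, _⟩ | ⟨h, _⟩ <;> rw [h] <;> (try rw [neg_neg]) <;> linarith
    have h7 : Real.exp (-|z.im|) ≤ 1 := Real.exp_le_one_iff.2 (by linarith)
    have h8 := Real.add_one_le_exp |z.im|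
    linarith
  · push Not at hb
    have hsin : |Real.sin z.re| ≤ ‖Complex.sin z‖ := by
      have h1 := Complex.abs_re_le_norm (Complex.sin z)
      rw [Complex.sin_eq z] at h1
      have h2 : (Complex.sin (z.re : ℂ) * Complex.cosh (z.im : ℂ) +
          Complex.cos (z.re : ℂ) * Complex.sinh (z.im : ℂ) * Complex.I).re
          = Real.sin z.re * Real.cosh z.im := by
        rw [← Complex.ofReal_sin, ← Complex.ofReal_cosh, ← Complex.ofReal_cos,
          ← Complex.ofReal_sinh]
        simp only [Complex.add_re, Complex.mul_re, Complex.ofReal_re, Complex.ofReal_im,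
          Complex.I_re, Complex.I_im, Complex.mul_im]
        ring
      rw [h2, ← Complex.sin_eq, abs_mul, abs_of_pos (Real.cosh_pos _)] at h1
      nlinarith [Real.one_le_cosh z.im, abs_nonneg (Real.sin z.re)]
    have hexp : Real.exp |z.im| ≤ 3 := by
      have : Real.exp |z.im| ≤ Real.exp 1 := Real.exp_le_exp.2 hb.le
      linarith [Real.exp_one_lt_d9]
    have habs : |Real.sin z.re| = |Real.sin (|z.re|)| := by
      rcases abs_cases z.re with ⟨h, _⟩ | ⟨h, _⟩ <;> rw [h]
      rw [Real.sin_neg, abs_neg]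
    set R := (n + 1 / 2) * Real.pi with hR
    have hn' : (1:ℝ) ≤ n := by exact_mod_cast hn
    have hR3 : 3 ≤ R := by nlinarith [Real.pi_gt_three]
    have hsq : R ^ 2 = |z.re| ^ 2 + |z.im| ^ 2 := by
      rw [← hz, Complex.sq_norm, Complex.normSq_apply, sq_abs, sq_abs]; ring
    have hre : |z.re| ≤ R := by rw [← hz]; exact Complex.abs_re_le_norm z
    set d := R - |z.re| with hd
    have hd0 : 0 ≤ d := by linarith
    have hd1 : d ≤ 1 / 2 := by
      by_contra hcon
      push Not at hcon
      nlinarith [abs_nonneg z.re, abs_nonneg z.im]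
    have hcos : |Real.sin (|z.re|)| = |Real.cos d| := by
      have e : |z.re| = n * Real.pi - (d - Real.pi / 2) := by rw [hd, hR]; ring
      rw [e, Real.sin_nat_mul_pi_sub, Real.sin_sub_pi_div_two]
      simp [abs_mul]
    have hc1 := Real.one_sub_sq_div_two_le_cos (x := d)
    have hc2 : 7 / 8 ≤ |Real.cos d| := by
      refine le_trans ?_ (le_abs_self _)
      nlinarith
    rw [habs, hcos] at hsin
    linarith

/-- An entire function small on large circles vanishes. -/
lemma entire_zero {f : ℂ → ℂ} (hf : Differentiable ℂ f)
    (h : ∀ ε > 0, ∀ r : ℝ, ∃ R > r, ∀ z, ‖z‖ = R → ‖f z‖ ≤ ε) (z : ℂ) : f z = 0 := by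
  rw [← norm_le_zero_iff]
  apply le_of_forall_pos_le_add
  intro ε hε
  rw [zero_add]
  obtain ⟨R, hR, hb⟩ := h ε hε ‖z‖
  have hR0 : R ≠ 0 := by linarith [norm_nonneg z]
  apply Complex.norm_le_of_forall_mem_frontier_norm_le (U := Metric.ball (0:ℂ) R)
    Metric.isBounded_ball hf.diffContOnCl
  · intro w hw
    rw [frontier_ball _ hR0] at hw
    exact hb w (by simpa using hw)
  · apply subset_closure
    simpa using hR

/-- Division of entire functions at simple zeros. -/
lemma entire_div {W D : ℂ → ℂ} (hW : Differentiable ℂ W) (hD : Differentiable ℂ D)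
    (h0 : ∀ z, D z = 0 → W z = 0 ∧ deriv D z ≠ 0) :
    ∃ f : ℂ → ℂ, Differentiable ℂ f ∧ ∀ z, W z = f z * D z := by
  classical
  refine ⟨fun z => if D z = 0 then deriv W z / deriv D z else W z / D z, ?_, ?_⟩
  · intro z
    by_cases hz : D z = 0
    · obtain ⟨hWz, hDz⟩ := h0 z hz
      have dW : Differentiable ℂ (dslope W z) := by
        rw [← differentiableOn_univ] at hW ⊢
        exact (Complex.differentiableOn_dslope univ_mem).2 hW
      have dD : Differentiable ℂ (dslope D z) := by
        rw [← differentiableOn_univ] at hD ⊢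
        exact (Complex.differentiableOn_dslope univ_mem).2 hD
      have hne : dslope D z z ≠ 0 := by rwa [dslope_same]
      have hev : ∀ᶠ w in 𝓝 z, dslope D z w ≠ 0 := (dD.continuous.continuousAt).eventually_ne hne
      have hd : DifferentiableAt ℂ (fun w => dslope W z w / dslope D z w) z := (dW z).div (dD z) hne
      refine hd.congr_of_eventuallyEq ?_
      filter_upwards [hev] with w hw
      by_cases hwz : w = z
      · subst hwz
        simp [hz]
      · have hwz' : w - z ≠ 0 := sub_ne_zero.2 hwz
        have e1 : D w = (w - z) * dslope D z w := by
          have := sub_smul_dslope D z w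
          rw [hz, sub_zero] at this
          exact this.symm
        have e2 : W w = (w - z) * dslope W z w := by
          have := sub_smul_dslope W z w
          rw [hWz, sub_zero] at this
          exact this.symm
        have hDw : D w ≠ 0 := by rw [e1]; exact mul_ne_zero hwz' hw
        simp only [hDw, if_false]
        rw [e1, e2, mul_div_mul_left _ _ hwz']
    · have hev : ∀ᶠ w in 𝓝 z, D w ≠ 0 := (hD.continuous.continuousAt).eventually_ne hz
      have hd : DifferentiableAt ℂ (fun w => W w / D w) z := (hW z).div (hD z) hz
      refine hd.congr_of_eventuallyEq ?_
      filter_upwards [hev] with w hw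
      simp [hw]
  · intro z
    by_cases hz : D z = 0
    · simp [hz, (h0 z hz).1]
    · simp [hz]

lemma entire_zero_k {f : ℂ → ℂ} (hf : Differentiable ℂ f) (c : ℝ) (hc : 0 < c) (C K : ℝ)
    (h : ∀ n : ℕ, 1 ≤ n → ∀ k : ℂ, ‖k * (c : ℂ)‖ = (n + 1 / 2) * Real.pi → K ≤ ‖k‖ → 1 ≤ ‖k‖ →
      ‖f (k ^ 2)‖ ≤ C / ‖k‖) (z : ℂ) : f z = 0 := by
  apply entire_zero hf
  intro ε hε r
  obtain ⟨n, hn⟩ := exists_nat_gt (max (max (K * c) (C / ε * c)) (max (1 * c) (max (r * c) 1)))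
  simp only [max_lt_iff] at hn
  obtain ⟨⟨h1, h2⟩, h3, h4, h5⟩ := hn
  have hn1 : 1 ≤ n := by exact_mod_cast h5.le
  set ρ := (n + 1 / 2) * Real.pi / c with hρ
  have hlarge : ∀ y : ℝ, y * c < n → y < ρ := by
    intro y hy
    rw [hρ, lt_div_iff₀ hc]
    nlinarith [Real.pi_gt_three]
  have hρ1 := hlarge 1 h3
  refine ⟨ρ ^ 2, by nlinarith [hlarge r h4], ?_⟩
  intro w hw
  obtain ⟨k, hk⟩ := IsAlgClosed.exists_pow_nat_eq w (n := 2) (by norm_num)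
  have hkn : ‖k‖ = ρ := by
    rw [← hk, norm_pow] at hw
    exact (pow_left_inj₀ (norm_nonneg _) (by linarith) (by norm_num)).1 hw
  have := h n hn1 k (by
    rw [norm_mul, hkn, Complex.norm_real, Real.norm_eq_abs, abs_of_pos hc, hρ]
    field_simp) (by rw [hkn]; exact (hlarge K h1).le) (by rw [hkn]; exact hρ1.le)
  rw [hk, hkn] at this
  refine this.trans ?_
  have h6 := hlarge _ h2
  rw [div_lt_iff₀ hε] at h6
  rw [div_le_iff₀ (by linarith)]
  linarith

lemma sol_lower {Q : ℝ → ℝ} (hQ : Continuous Q) {s s' : ℂ → ℝ → ℂ} (hs : Sol Q 0 1 s s')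
    {M : ℝ} (hM : ∀ x ∈ Icc (0:ℝ) 1, |Q x| ≤ M) (k : ℂ) (hkM : 32 * M ≤ ‖k‖) (hk1 : 1 ≤ ‖k‖)
    {x : ℝ} (hx : x ∈ Icc (0:ℝ) 1) (n : ℕ) (hn : 1 ≤ n)
    (hkn : ‖k * (x : ℂ)‖ = (n + 1 / 2) * Real.pi) :
    Real.exp (|k.im| * x) / (16 * ‖k‖) ≤ ‖s (k ^ 2) x‖ := by
  have hM0 : 0 ≤ M := (abs_nonneg _).trans (hM x hx)
  have hk' : 0 < ‖k‖ := by linarith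
  have hk : k ≠ 0 := norm_pos_iff.1 hk'
  have h1 := sol_asymp hQ hs hM k hk (by linarith) hx
  have h2 := sin_lower n hn _ hkn
  have e : |(k * (x:ℂ)).im| = |k.im| * x := by simp [abs_mul, abs_of_nonneg hx.1]
  rw [e] at h2
  have h3 : Real.exp (|k.im| * x) / 8 / ‖k‖ ≤ ‖Complex.sin (k * x) / k‖ := by
    rw [norm_div]; gcongr
  have h4 := norm_sub_norm_le (Complex.sin (k * x) / k) (Complex.sin (k * x) / k - s (k ^ 2) x)
  rw [sub_sub_cancel, norm_sub_rev _ (s (k ^ 2) x)] at h4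
  have h5 : M * (2 / ‖k‖) / ‖k‖ * Real.exp (|k.im| * x) ≤ Real.exp (|k.im| * x) / (16 * ‖k‖) := by
    have : M * (2 / ‖k‖) / ‖k‖ ≤ 1 / (16 * ‖k‖) := by
      rw [div_le_div_iff₀ hk' (by positivity)]
      have : M * (2 / ‖k‖) * (16 * ‖k‖) = 32 * M := by field_simp; ring
      rw [this]; linarith
    calc _ ≤ 1 / (16 * ‖k‖) * Real.exp (|k.im| * x) := by gcongr
      _ = _ := by ring
  have h6 : Real.exp (|k.im| * x) / 8 / ‖k‖ = 2 * (Real.exp (|k.im| * x) / (16 * ‖k‖)) := by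
    field_simp; try ring
  linarith

lemma hasDerivAt_re {f : ℝ → ℂ} {f' : ℂ} {x : ℝ} (h : HasDerivAt f f' x) :
    HasDerivAt (fun t => (f t).re) f'.re x :=
  (Complex.reCLM.hasFDerivAt (x := f x)).comp_hasDerivAt x h

lemma sol_nontrivial {Q : ℝ → ℝ} {s s' : ℂ → ℝ → ℂ} (hs : Sol Q 0 1 s s') (z : ℂ) :
    ∃ x ∈ Icc (0:ℝ) 1, (s z x).re ≠ 0 := by
  by_contra hcon
  push Not at hcon
  have h0 : (0:ℝ) ∈ Icc (0:ℝ) 1 := by simp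
  have h1 := (hasDerivAt_re (hs.der z 0)).hasDerivWithinAt (s := Icc (0:ℝ) 1)
  have h2 : HasDerivWithinAt (fun t => (s z t).re) 0 (Icc (0:ℝ) 1) 0 :=
    (hasDerivWithinAt_const (0:ℝ) (Icc (0:ℝ) 1) (0:ℝ)).congr hcon (hcon 0 h0)
  have h3 := (uniqueDiffOn_Icc (zero_lt_one (α := ℝ))) 0 h0
  have := h3.eq_deriv _ h1 h2
  rw [hs.der0] at this
  simp at this

lemma eigen_of_zero {Q : ℝ → ℝ} {s s' : ℂ → ℝ → ℂ} (hs : Sol Q 0 1 s s') (z : ℝ)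
    (hz : s z 1 = 0) : IsDirichletEigenvalue Q z := by
  refine ⟨fun x => (s z x).re, fun x => (s' z x).re, ?_, ?_, sol_nontrivial hs z, ?_, ?_⟩
  · intro x _
    exact hasDerivAt_re (hs.der z x)
  · intro x hx
    refine (hasDerivAt_re (hs.der' z x hx)).congr_deriv ?_
    simp only [← Complex.ofReal_sub, Complex.re_ofReal_mul]
    ring
  · simp [hs.val0]
  · simp [hz]

lemma zero_of_eigen {Q : ℝ → ℝ} (hQ : Continuous Q) {s s' : ℂ → ℝ → ℂ} (hs : Sol Q 0 1 s s') (z : ℝ)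
    (hz : IsDirichletEigenvalue Q z) : s z 1 = 0 := by
  obtain ⟨ψ, ψ', h1, h2, ⟨x, hx, hne⟩, h3, h4⟩ := hz
  obtain ⟨c, c', hc⟩ := exists_sol Q hQ 1 0
  have key : ∀ b ∈ Icc (0:ℝ) 1, (ψ b : ℂ) = (ψ' 0 : ℂ) * s z b := by
    intro b hb
    have hsub : ∀ x ∈ Icc 0 b, x ∈ Icc (0:ℝ) 1 := fun x hx => ⟨hx.1, hx.2.trans hb.2⟩
    have := represent hQ hc hs z hb (u := fun x => (ψ x : ℂ)) (u' := fun x => (ψ' x : ℂ))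
      (fun x hx => (h1 x (hsub x hx)).ofReal_comp) (fun x hx => by
        refine ((h2 x (hsub x hx)).ofReal_comp).congr_deriv ?_
        push_cast; ring)
    simpa [h3] using this
  have k1 := key 1 (by simp)
  rw [h4] at k1
  have k2 := key x hx
  have hne' : (ψ' 0 : ℂ) ≠ 0 := by
    intro h
    rw [h, zero_mul] at k2
    exact hne (by exact_mod_cast k2)
  have : (ψ' 0 : ℂ) * s z 1 = 0 := by rw [← k1]; simp
  exact (mul_eq_zero.1 this).resolve_left hne'

lemma simple_zero {Q : ℝ → ℝ} (hQ : Continuous Q) {s s' : ℂ → ℝ → ℂ} (hs : Sol Q 0 1 s s') (z : ℂ)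
    (hz : s z 1 = 0) : z.im = 0 ∧ deriv (fun l => s l 1) z ≠ 0 := by
  set J : ℂ → ℂ := fun l => ∫ x in (0:ℝ)..1, s l x * star (s z x) with hJ
  have hJc : Continuous J := hs.contInt (fun x => star (s z x)) (hs.cont z).star
  have hJz : J z ≠ 0 := by
    have e : J z = ((∫ x in (0:ℝ)..1, ‖s z x‖ ^ 2 : ℝ) : ℂ) := by
      rw [← intervalIntegral.integral_ofReal]
      apply intervalIntegral.integral_congr
      intro x _
      simp only [Complex.star_def, Complex.mul_conj, Complex.normSq_eq_norm_sq]
    rw [e]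
    have hc := hs.cont z
    have : 0 < ∫ x in (0:ℝ)..1, ‖s z x‖ ^ 2 := by
      apply intervalIntegral.integral_pos zero_lt_one
      · fun_prop
      · intro x _; positivity
      · obtain ⟨x, hx, hne⟩ := sol_nontrivial hs z
        refine ⟨x, hx, ?_⟩
        have : s z x ≠ 0 := fun h => hne (by simp [h])
        positivity
    exact_mod_cast this.ne'
  have hg : ∀ l, (l - star z) * J l = s l 1 * star (s' z 1) := by
    intro l
    have := green (zero_le_one (α := ℝ)) (pot_cont hQ l).continuousOn
      (pot_cont hQ (star z)).continuousOn (fun x _ => hs.der l x) (hs.der' l)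
      (v := fun x => star (s z x)) (v' := fun x => star (s' z x)) (fun x _ => (hs.der z x).star)
      (fun x hx => by
        refine ((hs.der' z x hx).star).congr_deriv ?_
        simp)
    simp only [hs.val0, hz, star_zero, mul_zero, zero_mul, sub_zero, sub_sub_sub_cancel_left] at this
    rw [← this, hJ, ← intervalIntegral.integral_const_mul]
  have hreal : z = star z := by
    have := hg z
    rw [hz, zero_mul] at this
    exact sub_eq_zero.1 ((mul_eq_zero.1 this).resolve_right hJz)
  constructor
  · have := congrArg Complex.im hreal
    simp at this
    linarith
  · intro hd
    have h1 : HasDerivAt (fun l => s l 1) 0 z := by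
      rw [← hd]
      exact (hs.diff 1 (by simp) z).hasDerivAt
    have h2 := h1.mul_const (star (s' z 1))
    rw [zero_mul, hasDerivAt_iff_tendsto_slope] at h2
    have h3 : Tendsto J (𝓝[≠] z) (𝓝 0) := by
      refine h2.congr' ?_
      filter_upwards [self_mem_nhdsWithin] with l hl
      have hl' : l - z ≠ 0 := sub_ne_zero.2 hl
      have hgl := hg l
      rw [← hreal] at hgl
      rw [slope_def_field, hz, zero_mul, sub_zero, ← hgl]
      field_simp
    have h4 : Tendsto J (𝓝[≠] z) (𝓝 (J z)) := (hJc.tendsto z).mono_left nhdsWithin_le_nhds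
    exact hJz (tendsto_nhds_unique h4 h3)

lemma step1 {p1 p2 : ℝ → ℝ} (hp1 : Continuous p1) (hp2 : Continuous p2)
    (hhalf : ∀ x ∈ Icc (1/2 : ℝ) 1, p1 x = p2 x)
    (hspec : ∀ l, IsDirichletEigenvalue p1 l → IsDirichletEigenvalue p2 l)
    {M : ℝ} (hM1 : ∀ x ∈ Icc (0:ℝ) 1, |p1 x| ≤ M) (hM2 : ∀ x ∈ Icc (0:ℝ) 1, |p2 x| ≤ M)
    {s1 s1' s2 s2' : ℂ → ℝ → ℂ} (h1 : Sol p1 0 1 s1 s1') (h2 : Sol p2 0 1 s2 s2') (l : ℂ) :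
    s1 l (1/2) * s2' l (1/2) - s1' l (1/2) * s2 l (1/2) = 0 := by
  have hb : (1/2 : ℝ) ∈ Icc (0:ℝ) 1 := by constructor <;> norm_num
  have hW : Differentiable ℂ
      (fun l => s1 l (1/2) * s2' l (1/2) - s1' l (1/2) * s2 l (1/2)) :=
    ((h1.diff _ hb).mul (h2.diff' _ hb)).sub ((h1.diff' _ hb).mul (h2.diff _ hb))
  have hD : Differentiable ℂ (fun l => s1 l 1) := h1.diff 1 (by simp)
  obtain ⟨f, hf, hfW⟩ := entire_div hW hD (by
    intro z hz
    obtain ⟨him, hd⟩ := simple_zero hp1 h1 z hz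
    refine ⟨?_, hd⟩
    have hzr : z = ((z.re : ℝ) : ℂ) := by
      apply Complex.ext <;> simp [him]
    have hz2 : s2 z 1 = 0 := by
      rw [hzr] at hz ⊢
      exact zero_of_eigen hp2 h2 _ (hspec _ (eigen_of_zero h1 _ hz))
    have hsub : ∀ x ∈ Icc (1/2:ℝ) 1, x ∈ Icc (0:ℝ) 1 := fun x hx => ⟨by linarith [hx.1], hx.2⟩
    have w := wronskian (a := 1/2) (b := 1) (by norm_num) (pot_cont hp1 z).continuousOn
      (fun x _ => h1.der z x) (fun x hx => h1.der' z x (hsub x hx))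
      (fun x _ => h2.der z x) (fun x hx => by
        rw [hhalf x hx]; exact h2.der' z x (hsub x hx))
    rw [hz2, show s1 z 1 = 0 from hz] at w
    simp only [zero_mul, mul_zero, sub_zero] at w
    exact w.symm)
  have hf0 : ∀ z, f z = 0 := by
    apply entire_zero_k hf 1 one_pos (64 * M) (32 * M)
    intro n hn k hkn hkM hk1
    have hM0 : 0 ≤ M := (abs_nonneg _).trans (hM1 _ hb)
    have hk' : 0 < ‖k‖ := by linarith
    have hk : k ≠ 0 := norm_pos_iff.1 hk'
    have hlow := sol_lower hp1 h1 hM1 k hkM hk1 (x := 1) (by simp) n hn (by exact_mod_cast hkn)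
    rw [mul_one] at hlow
    have hsub : ∀ x ∈ Icc (0:ℝ) (1/2), x ∈ Icc (0:ℝ) 1 := fun x hx => ⟨hx.1, by linarith [hx.2]⟩
    have g := green (a := 0) (b := 1/2) (by norm_num) (pot_cont hp1 (k^2)).continuousOn
      (pot_cont hp2 (k^2)).continuousOn
      (fun x _ => h1.der (k^2) x) (fun x hx => h1.der' (k^2) x (hsub x hx))
      (fun x _ => h2.der (k^2) x) (fun x hx => h2.der' (k^2) x (hsub x hx))
    simp only [h1.val0, h2.val0, zero_mul, mul_zero, sub_zero, sub_sub_sub_cancel_right] at g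
    have hWn : ‖s1 (k^2) (1/2) * s2' (k^2) (1/2) - s1' (k^2) (1/2) * s2 (k^2) (1/2)‖
        ≤ 4 * M / ‖k‖ ^ 2 * Real.exp |k.im| := by
      rw [← g]
      have hi := intervalIntegral.norm_integral_le_of_norm_le_const (a := 0) (b := 1/2)
        (f := fun x => ((p2 x : ℂ) - p1 x) * (s1 (k^2) x * s2 (k^2) x))
        (C := 8 * M / ‖k‖ ^ 2 * Real.exp |k.im|) (by
          intro x hx
          rw [uIoc_of_le (by norm_num)] at hx
          have hx' : x ∈ Icc (0:ℝ) 1 := hsub x ⟨hx.1.le, hx.2⟩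
          have b1 := sol_bound hp1 h1 hM1 k hk (by linarith) hx'
          have b2 := sol_bound hp2 h2 hM2 k hk (by linarith) hx'
          have b3 : ‖(p2 x : ℂ) - p1 x‖ ≤ 2 * M := by
            rw [← Complex.ofReal_sub, Complex.norm_real, Real.norm_eq_abs]
            have := abs_sub (p2 x) (p1 x)
            linarith [hM1 x hx', hM2 x hx']
          rw [norm_mul, norm_mul]
          calc _ ≤ (2 * M) * ((2 / ‖k‖ * Real.exp (|k.im| * x)) * (2 / ‖k‖ * Real.exp (|k.im| * x))) := by
                gcongr
            _ = 8 * M / ‖k‖ ^ 2 * (Real.exp (|k.im| * x) * Real.exp (|k.im| * x)) := by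
                field_simp; try ring
            _ ≤ _ := by
                rw [← Real.exp_add]
                have : |k.im| * x + |k.im| * x ≤ |k.im| := by
                  nlinarith [abs_nonneg k.im, hx.2]
                gcongr)
      refine hi.trans (le_of_eq ?_)
      rw [sub_zero, abs_of_pos (show (0:ℝ) < 1/2 by norm_num)]
      ring
    have hfw := congrArg norm (hfW (k^2))
    simp only [norm_mul] at hfw
    rw [hfw] at hWn
    have hE := Real.exp_pos |k.im|
    have h3 : ‖f (k^2)‖ * (Real.exp |k.im| / (16 * ‖k‖)) ≤ 4 * M / ‖k‖ ^ 2 * Real.exp |k.im| :=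
      le_trans (by gcongr) hWn
    have h4 : ‖f (k^2)‖ * (Real.exp |k.im| / (16 * ‖k‖)) ≤
        64 * M / ‖k‖ * (Real.exp |k.im| / (16 * ‖k‖)) := by
      refine h3.trans (le_of_eq ?_)
      field_simp; try ring
    exact le_of_mul_le_mul_right h4 (by positivity)
  have := hfW l
  rw [hf0 l, zero_mul] at this
  exact this

lemma step2 {p1 p2 : ℝ → ℝ} (hp1 : Continuous p1) (hp2 : Continuous p2)
    {M : ℝ} (hM1 : ∀ x ∈ Icc (-1:ℝ) 1, |p1 x| ≤ M) (hM2 : ∀ x ∈ Icc (-1:ℝ) 1, |p2 x| ≤ M)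
    {s1 s1' s2 s2' : ℂ → ℝ → ℂ} (h1 : Sol p1 0 1 s1 s1') (h2 : Sol p2 0 1 s2 s2')
    (hW : ∀ l, s1 l (1/2) * s2' l (1/2) - s1' l (1/2) * s2 l (1/2) = 0)
    {c1 c1' c2 c2' t1 t1' t2 t2' : ℂ → ℝ → ℂ}
    (hc1 : Sol (fun y => p1 (1/2 - y)) 1 0 c1 c1') (hc2 : Sol (fun y => p2 (1/2 - y)) 1 0 c2 c2')
    (ht1 : Sol (fun y => p1 (1/2 - y)) 0 1 t1 t1') (ht2 : Sol (fun y => p2 (1/2 - y)) 0 1 t2 t2')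
    {y : ℝ} (hy : y ∈ Ioo (0:ℝ) (1/2)) (l : ℂ) :
    c1 l y * t2 l y - t1 l y * c2 l y = 0 := by
  have hy1 : y ∈ Icc (0:ℝ) 1 := ⟨hy.1.le, by linarith [hy.2]⟩
  have hb : (1/2 : ℝ) ∈ Icc (0:ℝ) 1 := by constructor <;> norm_num
  have hx1 : 1/2 - y ∈ Icc (0:ℝ) 1 := ⟨by linarith [hy.2], by linarith [hy.1]⟩
  have hM0 : 0 ≤ M := (abs_nonneg _).trans (hM1 0 (by simp))
  have sub1 : ∀ x ∈ Icc (0:ℝ) 1, x ∈ Icc (-1:ℝ) 1 := fun x hx => ⟨by linarith [hx.1], hx.2⟩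
  have sub2 : ∀ x ∈ Icc (0:ℝ) 1, 1/2 - x ∈ Icc (-1:ℝ) 1 :=
    fun x hx => ⟨by linarith [hx.2], by linarith [hx.1]⟩
  have hdiff : Differentiable ℂ (fun l => c1 l y * t2 l y - t1 l y * c2 l y) :=
    ((hc1.diff y hy1).mul (ht2.diff y hy1)).sub ((ht1.diff y hy1).mul (hc2.diff y hy1))
  have rep : ∀ {p : ℝ → ℝ} (_ : Continuous p) {s s' c c' t t' : ℂ → ℝ → ℂ} (_ : Sol p 0 1 s s')
      (_ : Sol (fun y => p (1/2 - y)) 1 0 c c') (_ : Sol (fun y => p (1/2 - y)) 0 1 t t') (l : ℂ),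
      s l (1/2 - y) = s l (1/2) * c l y - s' l (1/2) * t l y := by
    intro p hp s s' c c' t t' hs hc ht l
    have hsubst : ∀ x : ℝ, HasDerivAt (fun x : ℝ => 1/2 - x) (-1) x := fun x => by
      exact (hasDerivAt_id x).const_sub (1/2)
    have := represent (Q := fun y => p (1/2 - y)) (by fun_prop) hc ht l hy1
      (u := fun x => s l (1/2 - x)) (u' := fun x => -s' l (1/2 - x))
      (fun x hx => by
        have := (hs.der l (1/2 - x)).scomp x (hsubst x)
        refine this.congr_deriv ?_
        simp)
      (fun x hx => by
        have hx' : 1/2 - x ∈ Icc (0:ℝ) 1 := ⟨by linarith [hx.2, hy.2], by linarith [hx.1]⟩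
        have := ((hs.der' l (1/2 - x) hx').scomp x (hsubst x)).neg
        refine this.congr_deriv ?_
        simp)
    simp only [sub_zero] at this
    rw [this]
    ring
  refine entire_zero_k hdiff (1/2) (by norm_num) 128 (32 * M) ?_ l
  intro n hn k hkn hkM hk1
  have hk' : 0 < ‖k‖ := by linarith
  have hk : k ≠ 0 := norm_pos_iff.1 hk'
  have low1 := sol_lower hp1 h1 (fun x hx => hM1 x (sub1 x hx)) k hkM hk1 hb n hn hkn
  have low2 := sol_lower hp2 h2 (fun x hx => hM2 x (sub1 x hx)) k hkM hk1 hb n hn hkn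
  have bs1 := sol_bound hp1 h1 (fun x hx => hM1 x (sub1 x hx)) k hk (by linarith) hx1
  have bs2 := sol_bound hp2 h2 (fun x hx => hM2 x (sub1 x hx)) k hk (by linarith) hx1
  have bt1 := sol_bound (by fun_prop) ht1 (fun x hx => hM1 _ (sub2 x hx)) k hk (by linarith) hy1
  have bt2 := sol_bound (by fun_prop) ht2 (fun x hx => hM2 _ (sub2 x hx)) k hk (by linarith) hy1
  have r1 := rep hp1 h1 hc1 ht1 (k^2)
  have r2 := rep hp2 h2 hc2 ht2 (k^2)
  have w := hW (k^2)
  have hexp : Real.exp (|k.im| * (1/2 - y)) * Real.exp (|k.im| * y) = Real.exp (|k.im| * (1/2)) := by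
    rw [← Real.exp_add]; ring_nf
  have quot : ∀ S X t : ℂ, Real.exp (|k.im| * (1/2)) / (16 * ‖k‖) ≤ ‖S‖ →
      ‖X‖ ≤ 2 / ‖k‖ * Real.exp (|k.im| * (1/2 - y)) → ‖t‖ ≤ 2 / ‖k‖ * Real.exp (|k.im| * y) →
      ‖X * t / S‖ ≤ 64 / ‖k‖ := by
    intro S X t hS hX ht
    have hS0 : 0 < ‖S‖ := lt_of_lt_of_le (by positivity) hS
    rw [norm_div, norm_mul, div_le_iff₀ hS0]
    calc _ ≤ (2 / ‖k‖ * Real.exp (|k.im| * (1/2 - y))) * (2 / ‖k‖ * Real.exp (|k.im| * y)) := by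
          gcongr
      _ = 4 / ‖k‖ ^ 2 * (Real.exp (|k.im| * (1/2 - y)) * Real.exp (|k.im| * y)) := by
          field_simp; try ring
      _ = 64 / ‖k‖ * (Real.exp (|k.im| * (1/2)) / (16 * ‖k‖)) := by
          rw [hexp]; field_simp; try ring
      _ ≤ _ := by gcongr
  have q1 := quot _ _ _ low1 bs1 bt2
  have q2 := quot _ _ _ low2 bs2 bt1
  have n1 : s1 (k^2) (1/2) ≠ 0 := by
    rw [← norm_pos_iff]; exact lt_of_lt_of_le (by positivity) low1
  have n2 : s2 (k^2) (1/2) ≠ 0 := by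
    rw [← norm_pos_iff]; exact lt_of_lt_of_le (by positivity) low2
  have eq : c1 (k^2) y * t2 (k^2) y - t1 (k^2) y * c2 (k^2) y =
      s1 (k^2) (1/2 - y) * t2 (k^2) y / s1 (k^2) (1/2)
      - s2 (k^2) (1/2 - y) * t1 (k^2) y / s2 (k^2) (1/2) := by
    rw [r1, r2]
    field_simp
    linear_combination (-(t1 (k^2) y * t2 (k^2) y)) * w
  rw [eq]
  refine (norm_sub_le _ _).trans ?_
  calc _ ≤ 64 / ‖k‖ + 64 / ‖k‖ := add_le_add q1 q2
    _ = _ := by ring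

lemma deriv_eq_of_eqOn {f g : ℝ → ℂ} {f' g' : ℂ} {x : ℝ} {J : Set ℝ} (hJ : IsOpen J) (hx : x ∈ J)
    (h : ∀ y ∈ J, f y = g y) (hf : HasDerivAt f f' x) (hg : HasDerivAt g g' x) : f' = g' := by
  have : f =ᶠ[𝓝 x] g := by
    filter_upwards [hJ.mem_nhds hx] with y hy using h y hy
  exact hf.unique (hg.congr_of_eventuallyEq this)

lemma step3 {Q1 Q2 : ℝ → ℝ} (hQ1 : Continuous Q1) (hQ2 : Continuous Q2)
    {c1 c1' c2 c2' t1 t1' t2 t2' : ℂ → ℝ → ℂ}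
    (hc1 : Sol Q1 1 0 c1 c1') (hc2 : Sol Q2 1 0 c2 c2')
    (ht1 : Sol Q1 0 1 t1 t1') (ht2 : Sol Q2 0 1 t2 t2')
    (hE : ∀ y ∈ Ioo (0:ℝ) (1/2), c1 0 y * t2 0 y - t1 0 y * c2 0 y = 0)
    {y : ℝ} (hy : y ∈ Ioo (0:ℝ) (1/2)) : Q1 y = Q2 y := by
  by_contra hne
  have hsub : ∀ x ∈ Ioo (0:ℝ) (1/2), x ∈ Icc (0:ℝ) 1 := fun x hx => ⟨hx.1.le, by linarith [hx.2]⟩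
  have wr : ∀ {Q : ℝ → ℝ} (_ : Continuous Q) {c c' t t' : ℂ → ℝ → ℂ}
      (_ : Sol Q 1 0 c c') (_ : Sol Q 0 1 t t'), ∀ x ∈ Ioo (0:ℝ) (1/2),
      c 0 x * t' 0 x - c' 0 x * t 0 x = 1 := by
    intro Q hQ c c' t t' hc ht x hx
    have hs2 : ∀ z ∈ Icc (0:ℝ) x, z ∈ Icc (0:ℝ) 1 :=
      fun z hz => ⟨hz.1, hz.2.trans (hsub x hx).2⟩
    have := wronskian hx.1.le (pot_cont hQ 0).continuousOn
      (fun z _ => hc.der 0 z) (fun z hz => hc.der' 0 z (hs2 z hz))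
      (fun z _ => ht.der 0 z) (fun z hz => ht.der' 0 z (hs2 z hz))
    rw [this]
    simp [hc.val0, hc.der0, ht.val0, ht.der0]
  have hJ0 : IsOpen (Ioo (0:ℝ) (1/2)) := isOpen_Ioo
  have d1 : ∀ x ∈ Ioo (0:ℝ) (1/2), c1' 0 x * t2 0 x + c1 0 x * t2' 0 x =
      t1' 0 x * c2 0 x + t1 0 x * c2' 0 x := by
    intro x hx
    exact deriv_eq_of_eqOn hJ0 hx (fun z hz => sub_eq_zero.1 (hE z hz))
      ((hc1.der 0 x).mul (ht2.der 0 x)) ((ht1.der 0 x).mul (hc2.der 0 x))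
  have sq : ∀ x ∈ Ioo (0:ℝ) (1/2), t1 0 x * t1 0 x = t2 0 x * t2 0 x := by
    intro x hx
    have w1 := wr hQ1 hc1 ht1 x hx
    have w2 := wr hQ2 hc2 ht2 x hx
    have d := d1 x hx
    have e := hE x hx
    linear_combination (t2 0 x * t2 0 x) * w1 - (t1 0 x * t1 0 x) * w2 + (t1 0 x * t2 0 x) * d
      - (t1 0 x * t2' 0 x + t1' 0 x * t2 0 x) * e
  have d2 : ∀ x ∈ Ioo (0:ℝ) (1/2), t1' 0 x * t1 0 x + t1 0 x * t1' 0 x =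
      t2' 0 x * t2 0 x + t2 0 x * t2' 0 x := by
    intro x hx
    exact deriv_eq_of_eqOn hJ0 hx sq ((ht1.der 0 x).mul (ht1.der 0 x))
      ((ht2.der 0 x).mul (ht2.der 0 x))
  have d2' : ∀ x ∈ Ioo (0:ℝ) (1/2), t1 0 x * t1' 0 x = t2 0 x * t2' 0 x := by
    intro x hx
    linear_combination (1/2 : ℂ) * d2 x hx
  have d3 : ∀ x ∈ Ioo (0:ℝ) (1/2), ((Q1 x : ℂ) - Q2 x) * (t1 0 x) ^ 4 = 0 := by
    intro x hx
    have d := deriv_eq_of_eqOn hJ0 hx d2' ((ht1.der 0 x).mul (ht1.der' 0 x (hsub x hx)))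
      ((ht2.der 0 x).mul (ht2.der' 0 x (hsub x hx)))
    have a := sq x hx
    have b := d2' x hx
    linear_combination (t1 0 x * t1 0 x) * d - (t1 0 x * t1' 0 x + t2 0 x * t2' 0 x) * b
      + (t2' 0 x * t2' 0 x - Q2 x * (t1 0 x * t1 0 x)) * a
  have hopen : IsOpen ({x | Q1 x ≠ Q2 x} ∩ Ioo (0:ℝ) (1/2)) :=
    (isOpen_ne_fun hQ1 hQ2).inter isOpen_Ioo
  have tz : ∀ x ∈ {x | Q1 x ≠ Q2 x} ∩ Ioo (0:ℝ) (1/2), t1 0 x = 0 := by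
    rintro x ⟨hx1, hx2⟩
    have := d3 x hx2
    have hx1' : (Q1 x : ℂ) - Q2 x ≠ 0 := by
      rw [sub_ne_zero]
      exact_mod_cast hx1
    exact pow_eq_zero_iff (by norm_num) |>.1 ((mul_eq_zero.1 this).resolve_left hx1')
  have tz' : t1' 0 y = 0 :=
    deriv_eq_of_eqOn (g := fun _ => 0) hopen ⟨hne, hy⟩ tz (ht1.der 0 y) (hasDerivAt_const y 0)
  have := wr hQ1 hc1 ht1 y hy
  rw [tz', tz y ⟨hne, hy⟩] at this
  simp at this

lemma eigen_congr {p q : ℝ → ℝ} (h : ∀ x ∈ Icc (0:ℝ) 1, p x = q x) (l : ℝ)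
    (hp : IsDirichletEigenvalue p l) : IsDirichletEigenvalue q l := by
  obtain ⟨ψ, ψ', h1, h2, h3⟩ := hp
  exact ⟨ψ, ψ', h1, fun x hx => by rw [← h x hx]; exact h2 x hx, h3⟩

theorem main_cont {p1 p2 : ℝ → ℝ} (hp1 : Continuous p1) (hp2 : Continuous p2)
    (hhalf : ∀ x ∈ Icc (1/2 : ℝ) 1, p1 x = p2 x)
    (hspec : ∀ l, IsDirichletEigenvalue p1 l → IsDirichletEigenvalue p2 l) :
    ∀ x ∈ Icc (0:ℝ) (1/2), p1 x = p2 x := by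
  obtain ⟨M1, hM1⟩ := (isCompact_Icc (a := (-1:ℝ)) (b := 1)).exists_bound_of_continuousOn
    hp1.continuousOn
  obtain ⟨M2, hM2⟩ := (isCompact_Icc (a := (-1:ℝ)) (b := 1)).exists_bound_of_continuousOn
    hp2.continuousOn
  have hB1 : ∀ x ∈ Icc (-1:ℝ) 1, |p1 x| ≤ max M1 M2 := fun x hx => (hM1 x hx).trans (le_max_left _ _)
  have hB2 : ∀ x ∈ Icc (-1:ℝ) 1, |p2 x| ≤ max M1 M2 := fun x hx => (hM2 x hx).trans (le_max_right _ _)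
  have sub1 : ∀ x ∈ Icc (0:ℝ) 1, x ∈ Icc (-1:ℝ) 1 := fun x hx => ⟨by linarith [hx.1], hx.2⟩
  obtain ⟨s1, s1', h1⟩ := exists_sol p1 hp1 0 1
  obtain ⟨s2, s2', h2⟩ := exists_sol p2 hp2 0 1
  have hQ1 : Continuous (fun y => p1 (1/2 - y)) := by fun_prop
  have hQ2 : Continuous (fun y => p2 (1/2 - y)) := by fun_prop
  obtain ⟨c1, c1', hc1⟩ := exists_sol _ hQ1 1 0
  obtain ⟨c2, c2', hc2⟩ := exists_sol _ hQ2 1 0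
  obtain ⟨t1, t1', ht1⟩ := exists_sol _ hQ1 0 1
  obtain ⟨t2, t2', ht2⟩ := exists_sol _ hQ2 0 1
  have hW := step1 hp1 hp2 hhalf hspec (fun x hx => hB1 x (sub1 x hx))
    (fun x hx => hB2 x (sub1 x hx)) h1 h2
  have hE : ∀ y ∈ Ioo (0:ℝ) (1/2), c1 0 y * t2 0 y - t1 0 y * c2 0 y = 0 := fun y hy =>
    step2 hp1 hp2 hB1 hB2 h1 h2 hW hc1 hc2 ht1 ht2 hy 0
  have hio : EqOn p1 p2 (Ioo (0:ℝ) (1/2)) := by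
    intro x hx
    have := step3 hQ1 hQ2 hc1 hc2 ht1 ht2 hE (y := 1/2 - x)
      ⟨by linarith [hx.2], by linarith [hx.1]⟩
    simpa using this
  have := hio.closure hp1 hp2
  rw [closure_Ioo (by norm_num)] at this
  exact this

end HL

/-- two continuous potentials that agree on `[1/2,1]` and have the same
set of Dirichlet eigenvalues coincide on all of `[0,1]`. -/
theorem spectrum_and_half_potential_determine_potential
    (q1 q2 : ℝ → ℝ)
    (hq1 : ContinuousOn q1 (Set.Icc 0 1)) (hq2 : ContinuousOn q2 (Set.Icc 0 1))
    (hhalf : ∀ x ∈ Set.Icc (1/2 : ℝ) 1, q1 x = q2 x)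
    (hspec : {lam : ℝ | IsDirichletEigenvalue q1 lam}
        = {lam : ℝ | IsDirichletEigenvalue q2 lam}) :
    ∀ x ∈ Set.Icc (0:ℝ) 1, q1 x = q2 x := by
  have c1 : Continuous (Set.IccExtend (zero_le_one (α := ℝ)) ((Set.Icc (0:ℝ) 1).domRestrict q1)) :=
    (continuousOn_iff_continuous_domRestrict.1 hq1).Icc_extend'
  have c2 : Continuous (Set.IccExtend (zero_le_one (α := ℝ)) ((Set.Icc (0:ℝ) 1).domRestrict q2)) :=
    (continuousOn_iff_continuous_domRestrict.1 hq2).Icc_extend'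
  have e1 : ∀ x ∈ Set.Icc (0:ℝ) 1,
      Set.IccExtend (zero_le_one (α := ℝ)) ((Set.Icc (0:ℝ) 1).domRestrict q1) x = q1 x :=
    fun x hx => Set.IccExtend_of_mem _ _ hx
  have e2 : ∀ x ∈ Set.Icc (0:ℝ) 1,
      Set.IccExtend (zero_le_one (α := ℝ)) ((Set.Icc (0:ℝ) 1).domRestrict q2) x = q2 x :=
    fun x hx => Set.IccExtend_of_mem _ _ hx
  have key := HL.main_cont c1 c2
    (fun x hx => by
      have hx' : x ∈ Set.Icc (0:ℝ) 1 := ⟨by linarith [hx.1], hx.2⟩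
      rw [e1 x hx', e2 x hx']
      exact hhalf x hx)
    (fun l hl => by
      have h1 : IsDirichletEigenvalue q1 l := HL.eigen_congr e1 l hl
      have h2 : IsDirichletEigenvalue q2 l := by
        have : l ∈ {lam : ℝ | IsDirichletEigenvalue q1 lam} := h1
        rw [hspec] at this
        exact this
      exact HL.eigen_congr (fun x hx => (e2 x hx).symm) l h2)
  intro x hx
  by_cases h : x ≤ 1/2
  · have := key x ⟨hx.1, h⟩
    rwa [e1 x hx, e2 x hx] at this
  · exact hhalf x ⟨by linarith, hx.2⟩
end

section
/- Let q1 and q2 be continuous real-valued potentials on [0,1] that are both symmetric about the midpoint, i.e. qi(1/2 + x) = qi(1/2 − x) for all x ∈ [0,1/2] and i = 1,2. If q1 and q2 have the same set of Dirichlet eigenvalues, then q1 = q2 on [0,1]. -/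
open Set Filter Topology MeasureTheory intervalIntegral

noncomputable section SL

abbrev SLI := Set.Icc (0:ℝ) 1
abbrev SLE := C(SLI, ℂ)

def slExt (u : SLE) : ℝ → ℂ := Set.IccExtend (zero_le_one' ℝ) u

lemma slExt_cont (u : SLE) : Continuous (slExt u) := u.continuous.Icc_extend'

lemma slExt_apply (u : SLE) (x : SLI) : slExt u x = u x := by
  simp [slExt]

lemma slExt_norm (u : SLE) (x : ℝ) : ‖slExt u x‖ ≤ ‖u‖ := by
  unfold slExt Set.IccExtend
  exact u.norm_coe_le_norm _

def slJfun (u : SLE) : SLE :=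
  ⟨fun x => ∫ t in (0:ℝ)..x, slExt u t, by
    have : Continuous fun x : ℝ => ∫ t in (0:ℝ)..x, slExt u t :=
      intervalIntegral.continuous_primitive (fun a b => (slExt_cont u).intervalIntegrable a b) 0
    exact this.comp continuous_subtype_val⟩

lemma slJfun_apply (u : SLE) (x : SLI) : slJfun u x = ∫ t in (0:ℝ)..x, slExt u t := rfl

def slJ : SLE →L[ℂ] SLE :=
  LinearMap.mkContinuous
    { toFun := slJfun
      map_add' := by
        intro u v
        ext x
        simp only [slJfun_apply, ContinuousMap.add_apply]
        rw [← intervalIntegral.integral_add ((slExt_cont u).intervalIntegrable _ _)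
          ((slExt_cont v).intervalIntegrable _ _)]
        rfl
      map_smul' := by
        intro c u
        ext x
        simp only [slJfun_apply, ContinuousMap.smul_apply, RingHom.id_apply]
        rw [← intervalIntegral.integral_smul]
        rfl } 1 (by
    intro u
    rw [one_mul, ContinuousMap.norm_le _ (norm_nonneg _)]
    intro x
    change ‖∫ t in (0:ℝ)..x, slExt u t‖ ≤ _
    have := intervalIntegral.norm_integral_le_of_norm_le_const (a := 0) (b := (x:ℝ))
      (f := slExt u) (C := ‖u‖) (fun t _ => slExt_norm u t)
    refine this.trans ?_
    have h0 := x.2.1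
    have h1 := x.2.2
    rw [sub_zero, abs_of_nonneg h0]
    nlinarith [norm_nonneg u])

lemma slJ_apply (u : SLE) (x : SLI) : slJ u x = ∫ t in (0:ℝ)..x, slExt u t := rfl

lemma slJ_bound (u : SLE) (C : ℝ) (n : ℕ) (h : ∀ t : SLI, ‖u t‖ ≤ C * (t:ℝ)^n / n.factorial)
    (x : SLI) : ‖slJ u x‖ ≤ C * (x:ℝ)^(n+1) / (n+1).factorial := by
  rw [slJ_apply]
  have h1 : ‖∫ t in (0:ℝ)..x, slExt u t‖ ≤ ∫ t in (0:ℝ)..x, C * t^n / n.factorial := by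
    apply intervalIntegral.norm_integral_le_of_norm_le x.2.1
    · refine ae_of_all _ fun t ht => ?_
      have := h ⟨t, ht.1.le, ht.2.trans x.2.2⟩
      rwa [← slExt_apply] at this
    · exact (by fun_prop : Continuous fun t : ℝ => C * t^n / n.factorial).intervalIntegrable _ _
  refine h1.trans (le_of_eq ?_)
  have : (fun t : ℝ => C * t^n / n.factorial) = fun t => (C / n.factorial) * t^n := by
    ext t; ring
  rw [this, intervalIntegral.integral_const_mul, integral_pow, Nat.factorial_succ]
  push_cast
  have : (n.factorial : ℝ) ≠ 0 := by positivity
  have : (n + 1 : ℝ) ≠ 0 := by positivity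
  field_simp
  simp

def slT (p : SLE) : SLE →L[ℂ] SLE := slJ ∘L slJ ∘L (ContinuousLinearMap.mul ℂ SLE p)

lemma slT_apply (p u : SLE) : slT p u = slJ (slJ (p * u)) := rfl

lemma slT_pow_bound (p u : SLE) (n : ℕ) (x : SLI) :
    ‖((slT p)^n) u x‖ ≤ (‖p‖^n * ‖u‖) * (x:ℝ)^n / n.factorial := by
  induction n generalizing x with
  | zero => simpa using u.norm_coe_le_norm x
  | succ n ih =>
    rw [pow_succ']
    change ‖slT p (((slT p)^n) u) x‖ ≤ _
    set w := ((slT p)^n) u with hw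
    rw [slT_apply]
    have hx0 := x.2.1
    have hx1 := x.2.2
    have h1 : ∀ t : SLI, ‖(p * w) t‖ ≤ (‖p‖ ^ (n+1) * ‖u‖) * (t:ℝ)^n / n.factorial := by
      intro t
      rw [ContinuousMap.mul_apply, norm_mul]
      calc ‖p t‖ * ‖w t‖ ≤ ‖p‖ * ((‖p‖^n * ‖u‖) * (t:ℝ)^n / n.factorial) :=
            mul_le_mul (p.norm_coe_le_norm t) (ih t) (norm_nonneg _) (norm_nonneg _)
        _ = _ := by ring
    have h2 := slJ_bound _ _ _ h1
    have h3 := slJ_bound _ _ _ h2 x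
    refine h3.trans ?_
    have hf : ((n+1).factorial : ℝ) ≤ (n+1+1).factorial := by
      exact_mod_cast Nat.factorial_le (by omega)
    have : (x:ℝ)^(n+1+1) ≤ (x:ℝ)^(n+1) := pow_le_pow_of_le_one hx0 hx1 (by omega)
    gcongr

lemma sl_ring_unit {R : Type*} [NormedRing R] [CompleteSpace R] (a : R) (n : ℕ)
    (h : ‖a ^ n‖ < 1) : IsUnit (1 - a) := by
  have hu : IsUnit (1 - a^n) := isUnit_one_sub_of_norm_lt_one h
  rw [← mul_neg_geom_sum] at hu
  have hc : Commute (1 - a) (∑ i ∈ Finset.range n, a ^ i) := by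
    apply Commute.sub_left (Commute.one_left _)
    exact Commute.sum_right _ _ _ fun i _ => (Commute.refl _).pow_right i
  exact (hc.isUnit_mul_iff.mp hu).1

lemma sl_affine_diff {F : Type*} [NormedAddCommGroup F] [NormedSpace ℂ F] (a b : F) :
    Differentiable ℂ fun l : ℂ => a + l • b := by
  fun_prop

lemma slT_unit (p : SLE) : IsUnit (1 - slT p) := by
  have ht : Tendsto (fun n : ℕ => ‖p‖^n / n.factorial) atTop (𝓝 0) :=
    FloorSemiring.tendsto_pow_div_factorial_atTop _
  obtain ⟨n, hn⟩ := (ht.eventually (gt_mem_nhds (show (0:ℝ) < 1/2 by norm_num))).exists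
  have hnorm : ‖(slT p)^n‖ ≤ 1/2 := by
    apply ContinuousLinearMap.opNorm_le_bound _ (by norm_num)
    intro u
    rw [ContinuousMap.norm_le _ (by positivity)]
    intro x
    refine (slT_pow_bound p u n x).trans ?_
    have : (x:ℝ)^n ≤ 1 := pow_le_one₀ x.2.1 x.2.2
    calc (‖p‖^n * ‖u‖) * (x:ℝ)^n / n.factorial ≤ (‖p‖^n * ‖u‖) * 1 / n.factorial := by gcongr
      _ = (‖p‖^n / n.factorial) * ‖u‖ := by ring
      _ ≤ _ := by gcongr
  exact sl_ring_unit (R := SLE →L[ℂ] SLE) (slT p) n (lt_of_le_of_lt hnorm (by norm_num))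

def slId : SLE := ⟨fun x => ((x:ℝ):ℂ), by fun_prop⟩

/-- The solution with parameter `l`, in the Banach space. -/
def slPhi (q : SLE) (l : ℂ) : SLE := Ring.inverse (1 - slT (q - l • 1)) slId

lemma slPhi_eq (q : SLE) (l : ℂ) :
    slPhi q l = slId + slJ (slJ ((q - l • 1) * slPhi q l)) := by
  have h := Ring.mul_inverse_cancel _ (slT_unit (q - l • 1))
  have h2 := congrArg (fun A : SLE →L[ℂ] SLE => A slId) h
  simp only [mul_apply_eq_comp, sub_apply,
    one_apply_eq_self] at h2
  rw [← slT_apply, ← h2]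
  simp [slPhi]

lemma slPhi_diff (q : SLE) : Differentiable ℂ (slPhi q) := by
  have h1 : Differentiable ℂ fun l : ℂ => (1 - slT (q - l • 1) : SLE →L[ℂ] SLE) := by
    have e : (fun l : ℂ => (1 - slT (q - l • 1) : SLE →L[ℂ] SLE))
        = fun l : ℂ => (1 - slT q) + l • slT 1 := by
      funext l
      ext u : 1
      simp only [sub_apply, one_apply_eq_self, add_apply, smul_apply, slT_apply, sub_mul,
        smul_mul_assoc, map_sub, map_smul]
      abel
    rw [e]
    exact sl_affine_diff (F := SLE →L[ℂ] SLE) _ _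
  intro l
  unfold slPhi
  have h2 : DifferentiableAt ℂ (fun l : ℂ => Ring.inverse (1 - slT (q - l • 1))) l := by
    have h3 : DifferentiableAt ℂ (Ring.inverse : (SLE →L[ℂ] SLE) → (SLE →L[ℂ] SLE))
        (1 - slT (q - l • 1)) :=
      differentiableAt_inverse (𝕜 := ℂ) (R := SLE →L[ℂ] SLE) (slT_unit (q - l • 1))
    exact DifferentiableAt.comp (𝕜 := ℂ) (F := SLE →L[ℂ] SLE) (G := SLE →L[ℂ] SLE) l h3 (h1 l)
  exact h2.clm_apply (differentiableAt_const _)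

/-- Bundle of facts about the family of solutions with `φ(0)=0, φ'(0)=1`. -/
structure SLSol (q : ℝ → ℝ) (φ φ' : ℂ → ℝ → ℂ) : Prop where
  d1 : ∀ l, ∀ x ∈ Set.Icc (0:ℝ) 1, HasDerivAt (φ l) (φ' l x) x
  d2 : ∀ l, ∀ x ∈ Set.Icc (0:ℝ) 1, HasDerivAt (φ' l) ((q x - l) * φ l x) x
  z0 : ∀ l, φ l 0 = 0
  z1 : ∀ l, φ' l 0 = 1
  hol : ∀ x ∈ Set.Icc (0:ℝ) 1, Differentiable ℂ fun l => φ l x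
  cont : ∀ l₀, Continuous fun l => ∫ t in (0:ℝ)..1, φ l₀ t * φ l t

lemma SL_exists (q : ℝ → ℝ) (hq : Continuous q) : ∃ φ φ', SLSol q φ φ' := by
  let Q : SLE := ⟨fun x => ((q x : ℝ) : ℂ), by fun_prop⟩
  let w : ℂ → ℝ → ℂ := fun l => slExt ((Q - l • 1) * slPhi Q l)
  have hw : ∀ l, Continuous (w l) := fun l => slExt_cont _
  let φ' : ℂ → ℝ → ℂ := fun l x => 1 + ∫ t in (0:ℝ)..x, w l t
  have hφ' : ∀ l x, HasDerivAt (φ' l) (w l x) x := fun l x =>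
    ((hw l).integral_hasStrictDerivAt 0 x).hasDerivAt.const_add 1
  have hφ'c : ∀ l, Continuous (φ' l) := fun l =>
    continuous_iff_continuousAt.2 fun x => (hφ' l x).continuousAt
  let φ : ℂ → ℝ → ℂ := fun l x => ∫ t in (0:ℝ)..x, φ' l t
  have hφ : ∀ l x, HasDerivAt (φ l) (φ' l x) x := fun l x =>
    ((hφ'c l).integral_hasStrictDerivAt 0 x).hasDerivAt
  have hφc : ∀ l, Continuous (φ l) := fun l =>
    continuous_iff_continuousAt.2 fun x => (hφ l x).continuousAt
  have key : ∀ l (x : SLI), φ l x = slPhi Q l x := by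
    intro l x
    rw [slPhi_eq]
    change ∫ t in (0:ℝ)..x, (1 + ∫ s in (0:ℝ)..t, w l s) = ((x:ℝ):ℂ) + slJ (slJ _) x
    rw [slJ_apply, intervalIntegral.integral_add]
    · congr 1
      · simp
      · apply intervalIntegral.integral_congr
        intro t ht
        rw [uIcc_of_le x.2.1] at ht
        have : slExt (slJ ((Q - l • 1) * slPhi Q l)) t = _ := slExt_apply _ ⟨t, ht.1, ht.2.trans x.2.2⟩
        simp only [this]
        rw [slJ_apply]
    · exact continuous_const.intervalIntegrable _ _
    · exact (intervalIntegral.continuous_primitive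
        (fun a b => (hw l).intervalIntegrable a b) 0).intervalIntegrable _ _
  refine ⟨φ, φ', ⟨fun l x _ => hφ l x, ?_, ?_, ?_, ?_, ?_⟩⟩
  · intro l x hx
    convert hφ' l x using 1
    rw [key l ⟨x, hx⟩]
    have : w l x = _ := slExt_apply _ ⟨x, hx⟩
    rw [this]
    simp [Q]
  · intro l; simp [φ]
  · intro l; simp [φ']
  · intro x hx
    have : (fun l => φ l x) = fun l => (ContinuousMap.evalCLM ℂ (⟨x, hx⟩ : SLI)) (slPhi Q l) := by
      ext l
      exact key l ⟨x, hx⟩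
    rw [this]
    exact (ContinuousLinearMap.differentiable _).comp (slPhi_diff Q)
  · intro l₀
    let P : SLE := slPhi Q l₀
    have : (fun l => ∫ t in (0:ℝ)..1, φ l₀ t * φ l t)
        = fun l => (ContinuousMap.evalCLM ℂ (⟨1, by simp⟩ : SLI)) (slJ (P * slPhi Q l)) := by
      ext l
      change _ = slJ (P * slPhi Q l) _
      rw [slJ_apply]
      apply intervalIntegral.integral_congr
      intro t ht
      rw [uIcc_of_le zero_le_one] at ht
      have : slExt (P * slPhi Q l) t = _ := slExt_apply _ ⟨t, ht⟩
      simp only [this]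
      rw [ContinuousMap.mul_apply, ← key, ← key]
    rw [this]
    have := (slPhi_diff Q).continuous
    fun_prop

end SL

noncomputable section SL

lemma SL_uniq (p : ℝ → ℂ) (hp : ContinuousOn p (Icc 0 1)) (u u' : ℝ → ℂ)
    (d1 : ∀ x ∈ Icc (0:ℝ) 1, HasDerivAt u (u' x) x)
    (d2 : ∀ x ∈ Icc (0:ℝ) 1, HasDerivAt u' (p x * u x) x)
    (h0 : u 0 = 0) (h1 : u' 0 = 0) : ∀ x ∈ Icc (0:ℝ) 1, u x = 0 ∧ u' x = 0 := by
  obtain ⟨C, hC⟩ := isCompact_Icc.exists_bound_of_continuousOn hp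
  have hd : ∀ x ∈ Icc (0:ℝ) 1, HasDerivAt (fun x => (u x, u' x)) (u' x, p x * u x) x :=
    fun x hx => (d1 x hx).prodMk (d2 x hx)
  have := eq_zero_of_abs_deriv_le_mul_abs_self_of_eq_zero_right (E := ℂ × ℂ) (a := 0) (b := 1)
    (f := fun x => (u x, u' x)) (f' := fun x => (u' x, p x * u x)) (K := max C 1)
    (fun x hx => (hd x hx).continuousAt.continuousWithinAt)
    (fun x hx => (hd x ⟨hx.1, hx.2.le⟩).hasDerivWithinAt) (by simp [h0, h1]) (by
      intro x hx
      have hx' : x ∈ Icc (0:ℝ) 1 := ⟨hx.1, hx.2.le⟩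
      rw [Prod.norm_def, Prod.norm_def]
      simp only [norm_mul]
      apply max_le
      · calc ‖u' x‖ ≤ 1 * max ‖u x‖ ‖u' x‖ := by rw [one_mul]; exact le_max_right _ _
          _ ≤ _ := by gcongr; exact le_max_right _ _
      · gcongr
        · exact (hC x hx').trans (le_max_left _ _)
        · exact le_max_left _ _)
  intro x hx
  have h := this x hx
  simpa using h

section
variable {q : ℝ → ℝ} {φ φ' : ℂ → ℝ → ℂ}

lemma SLSol.contOn (h : SLSol q φ φ') (l : ℂ) : ContinuousOn (φ l) (Icc 0 1) :=
  fun x hx => (h.d1 l x hx).continuousAt.continuousWithinAt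

lemma SLSol.contOn' (h : SLSol q φ φ') (l : ℂ) : ContinuousOn (φ' l) (Icc 0 1) :=
  fun x hx => (h.d2 l x hx).continuousAt.continuousWithinAt

lemma SLSol.wronsk (h : SLSol q φ φ') (l m : ℂ) :
    φ' l 1 * φ m 1 - φ l 1 * φ' m 1 = (m - l) * ∫ t in (0:ℝ)..1, φ l t * φ m t := by
  rw [← intervalIntegral.integral_const_mul]
  have := intervalIntegral.integral_eq_sub_of_hasDerivAt (a := 0) (b := 1)
    (f := fun x => φ' l x * φ m x - φ l x * φ' m x) (f' := fun t => (m - l) * (φ l t * φ m t))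
    (by
      intro x hx
      rw [uIcc_of_le zero_le_one] at hx
      refine HasDerivAt.congr_deriv (((h.d2 l x hx).mul (h.d1 m x hx)).sub ((h.d1 l x hx).mul (h.d2 m x hx))) ?_
      ring)
    (by
      apply ContinuousOn.intervalIntegrable
      rw [uIcc_of_le zero_le_one]
      exact continuousOn_const.mul ((h.contOn l).mul (h.contOn m)))
  rw [this]
  simp [h.z0]

lemma SLSol.conj (h : SLSol q φ φ') (hq : ContinuousOn q (Icc 0 1)) (l : ℂ) :
    ∀ x ∈ Icc (0:ℝ) 1, φ (star l) x = star (φ l x) ∧ φ' (star l) x = star (φ' l x) := by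
  have := SL_uniq (fun x => (q x : ℂ) - star l)
    ((Complex.continuous_ofReal.comp_continuousOn hq).sub continuousOn_const)
    (fun x => φ (star l) x - star (φ l x)) (fun x => φ' (star l) x - star (φ' l x))
    (fun x hx => (h.d1 _ x hx).sub (h.d1 l x hx).star)
    (fun x hx => by
      refine HasDerivAt.congr_deriv ((h.d2 (star l) x hx).sub (h.d2 l x hx).star) ?_
      simp only [star_mul', star_sub]
      have : star ((q x : ℂ)) = q x := Complex.conj_ofReal _
      rw [this]
      ring)
    (by simp [h.z0]) (by simp [h.z1])
  intro x hx
  obtain ⟨h1, h2⟩ := this x hx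
  exact ⟨sub_eq_zero.1 h1, sub_eq_zero.1 h2⟩

lemma SLSol.ne_zero (h : SLSol q φ φ') (l : ℂ) (b : ℝ) (hb : 0 < b) :
    ∃ c ∈ Icc (0:ℝ) b, φ l c ≠ 0 := by
  by_contra! hc
  have h0 : (0:ℝ) ∈ Icc (0:ℝ) b := ⟨le_rfl, hb.le⟩
  have h1 : HasDerivWithinAt (φ l) (φ' l 0) (Icc 0 b) 0 :=
    (h.d1 l 0 ⟨le_rfl, zero_le_one⟩).hasDerivWithinAt
  have h2 : HasDerivWithinAt (φ l) 0 (Icc 0 b) 0 :=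
    (hasDerivWithinAt_const (0:ℝ) (Icc 0 b) (0:ℂ)).congr hc (hc 0 h0)
  have := (uniqueDiffOn_Icc hb 0 h0).eq_deriv _ h1 h2
  rw [h.z1] at this
  exact one_ne_zero this

lemma SLSol.norm_int_pos (h : SLSol q φ φ') (l : ℂ) :
    0 < ∫ t in (0:ℝ)..1, ‖φ l t‖^2 := by
  obtain ⟨c, hc, hc'⟩ := h.ne_zero l 1 one_pos
  exact intervalIntegral.integral_pos (f := fun t => ‖φ l t‖^2) zero_lt_one
    ((h.contOn l).norm.pow 2) (fun x _ => by positivity) ⟨c, hc, by positivity⟩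

lemma SLSol.int_conj (h : SLSol q φ φ') (hq : ContinuousOn q (Icc 0 1)) (l : ℂ) :
    ∫ t in (0:ℝ)..1, φ l t * φ (star l) t = ((∫ t in (0:ℝ)..1, ‖φ l t‖^2 : ℝ) : ℂ) := by
  rw [← intervalIntegral.integral_ofReal]
  apply intervalIntegral.integral_congr
  intro t ht
  rw [uIcc_of_le zero_le_one] at ht
  simp only
  rw [(h.conj hq l t ht).1]
  have := Complex.mul_conj' (φ l t)
  push_cast
  exact this

lemma SLSol.zero_real (h : SLSol q φ φ') (hq : ContinuousOn q (Icc 0 1)) (l : ℂ)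
    (hl : φ l 1 = 0) : star l = l := by
  have h1 := h.wronsk l (star l)
  rw [(h.conj hq l 1 ⟨zero_le_one, le_rfl⟩).1, hl, h.int_conj hq l] at h1
  have h2 : ((∫ t in (0:ℝ)..1, ‖φ l t‖^2 : ℝ) : ℂ) ≠ 0 := by
    exact_mod_cast (h.norm_int_pos l).ne'
  have h3 : (star l - l) * ((∫ t in (0:ℝ)..1, ‖φ l t‖^2 : ℝ) : ℂ) = 0 := by
    rw [← h1]; simp
  exact sub_eq_zero.1 ((mul_eq_zero.1 h3).resolve_right h2)

lemma SLSol.deriv_zero (h : SLSol q φ φ') (hq : ContinuousOn q (Icc 0 1)) (l : ℂ)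
    (hl : φ l 1 = 0) :
    ∃ c : ℝ, 0 < c ∧ φ' l 1 * deriv (fun m => φ m 1) l = c := by
  refine ⟨_, h.norm_int_pos l, ?_⟩
  have hi := h.int_conj hq l
  rw [h.zero_real hq l hl] at hi
  rw [← hi]
  have h1 : HasDerivAt (fun m => φ' l 1 * φ m 1) (φ' l 1 * deriv (fun m => φ m 1) l) l :=
    ((h.hol 1 ⟨zero_le_one, le_rfl⟩) l).hasDerivAt.const_mul _
  have h2 : HasDerivAt (fun m => φ' l 1 * φ m 1) (∫ t in (0:ℝ)..1, φ l t * φ l t) l := by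
    rw [hasDerivAt_iff_tendsto_slope]
    have hc : Tendsto (fun m => ∫ t in (0:ℝ)..1, φ l t * φ m t) (𝓝[≠] l)
        (𝓝 (∫ t in (0:ℝ)..1, φ l t * φ l t)) := ((h.cont l).tendsto l).mono_left nhdsWithin_le_nhds
    refine hc.congr' ?_
    filter_upwards [self_mem_nhdsWithin] with m hm
    have hm' : m - l ≠ 0 := sub_ne_zero.2 hm
    have hw := h.wronsk l m
    rw [hl, zero_mul, sub_zero] at hw
    simp only [slope, vsub_eq_sub, smul_eq_mul]
    rw [hw, hl]
    field_simp
    simp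
  exact h1.unique h2

lemma SLSol.refl (h : SLSol q φ φ') (hq : ContinuousOn q (Icc 0 1))
    (hs : ∀ x ∈ Icc (0:ℝ) 1, q (1 - x) = q x) (l : ℂ) (hl : φ l 1 = 0) :
    (φ' l 1)^2 = 1 ∧ ∀ x ∈ Icc (0:ℝ) 1, φ l (1 - x) = - φ' l 1 * φ l x := by
  have hm : ∀ x ∈ Icc (0:ℝ) 1, 1 - x ∈ Icc (0:ℝ) 1 := fun x hx =>
    ⟨by linarith [hx.2], by linarith [hx.1]⟩
  have := SL_uniq (fun x => (q x : ℂ) - l)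
    ((Complex.continuous_ofReal.comp_continuousOn hq).sub continuousOn_const)
    (fun x => φ l (1 - x) + φ' l 1 * φ l x) (fun x => - φ' l (1 - x) + φ' l 1 * φ' l x)
    (fun x hx => ((h.d1 l _ (hm x hx)).comp_const_sub 1 x).add ((h.d1 l x hx).const_mul _))
    (fun x hx => by
      refine HasDerivAt.congr_deriv (((h.d2 l _ (hm x hx)).comp_const_sub 1 x).neg.add ((h.d2 l x hx).const_mul (φ' l 1))) ?_
      rw [hs x hx]
      ring)
    (by simp [h.z0, hl]) (by simp [h.z1])
  constructor
  · have h1 := (this 1 ⟨zero_le_one, le_rfl⟩).2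
    simp only [sub_self, h.z1] at h1
    linear_combination h1
  · intro x hx
    linear_combination (this x hx).1

lemma SLSol.wronsk_refl (h : SLSol q φ φ')
    (hs : ∀ x ∈ Icc (0:ℝ) 1, q (1 - x) = q x) (l : ℂ) :
    ∀ x ∈ Icc (0:ℝ) 1, φ' l x * φ l (1 - x) + φ l x * φ' l (1 - x) = φ l 1 := by
  have hm : ∀ x ∈ Icc (0:ℝ) 1, 1 - x ∈ Icc (0:ℝ) 1 := fun x hx =>
    ⟨by linarith [hx.2], by linarith [hx.1]⟩
  have hd : ∀ x ∈ Icc (0:ℝ) 1,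
      HasDerivAt (fun x => φ' l x * φ l (1 - x) + φ l x * φ' l (1 - x)) 0 x := by
    intro x hx
    refine HasDerivAt.congr_deriv (((h.d2 l x hx).mul ((h.d1 l _ (hm x hx)).comp_const_sub 1 x)).add
      ((h.d1 l x hx).mul ((h.d2 l _ (hm x hx)).comp_const_sub 1 x))) ?_
    rw [hs x hx]
    ring
  intro x hx
  have := constant_of_has_deriv_right_zero (a := (0:ℝ)) (b := 1)
    (f := fun x => φ' l x * φ l (1 - x) + φ l x * φ' l (1 - x))
    (fun x hx => (hd x hx).continuousAt.continuousWithinAt)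
    (fun x hx => (hd x ⟨hx.1, hx.2.le⟩).hasDerivWithinAt) x hx
  rw [this]
  simp [h.z0, h.z1]

lemma SL_norm_sin (z : ℂ) : ‖Complex.sin z‖ ≤ Real.exp |z.im| := by
  rw [Complex.sin]
  have h1 : ‖Complex.exp (-z * Complex.I)‖ ≤ Real.exp |z.im| := by
    rw [Complex.norm_exp]
    apply Real.exp_le_exp.2
    simpa using le_abs_self z.im
  have h2 : ‖Complex.exp (z * Complex.I)‖ ≤ Real.exp |z.im| := by
    rw [Complex.norm_exp]
    apply Real.exp_le_exp.2
    simpa using neg_le_abs z.im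
  rw [norm_div, norm_mul, Complex.norm_I]
  have h3 := norm_sub_le (Complex.exp (-z * Complex.I)) (Complex.exp (z * Complex.I))
  simp only [Complex.norm_ofNat, mul_one]
  linarith

lemma SLSol.duhamel (h : SLSol q φ φ') (hq : ContinuousOn q (Icc 0 1)) (k : ℂ) (x : ℝ)
    (hx : x ∈ Icc (0:ℝ) 1) :
    k * φ (k^2) x - Complex.sin (k * x)
      = ∫ t in (0:ℝ)..x, Complex.sin (k * (x - t)) * (q t * φ (k^2) t) := by
  have hsub : Icc (0:ℝ) x ⊆ Icc 0 1 := Icc_subset_Icc_right hx.2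
  have := intervalIntegral.integral_eq_sub_of_hasDerivAt (a := 0) (b := x)
    (f := fun t : ℝ => k * φ (k^2) t * Complex.cos (k * (x - t))
      + φ' (k^2) t * Complex.sin (k * (x - t)))
    (f' := fun t : ℝ => Complex.sin (k * (x - t)) * (q t * φ (k^2) t))
    (by
      intro t ht
      rw [uIcc_of_le hx.1] at ht
      have ht' := hsub ht
      have hlin : HasDerivAt (fun t : ℝ => k * ((x:ℂ) - t)) (-k) t := by
        have := ((Complex.ofRealCLM.hasDerivAt (x := t)).const_sub (x:ℂ)).const_mul k
        simpa using this
      have hcos := (Complex.hasDerivAt_cos (k * (x - t))).comp t hlin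
      have hsin := (Complex.hasDerivAt_sin (k * (x - t))).comp t hlin
      refine HasDerivAt.congr_deriv ((((h.d1 (k^2) t ht').const_mul k).mul hcos).add ((h.d2 (k^2) t ht').mul hsin)) ?_
      simp only [Function.comp]
      ring)
    (by
      apply ContinuousOn.intervalIntegrable
      rw [uIcc_of_le hx.1]
      exact (by fun_prop : Continuous fun t : ℝ => Complex.sin (k * (x - t))).continuousOn.mul
        ((Complex.continuous_ofReal.comp_continuousOn (hq.mono hsub)).mul ((h.contOn _).mono hsub)))
  rw [this]
  simp [h.z0, h.z1]

lemma SLSol.duhamel_bound (h : SLSol q φ φ') (hq : ContinuousOn q (Icc 0 1)) (Q : ℝ)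
    (hQ : ∀ x ∈ Icc (0:ℝ) 1, |q x| ≤ Q) (k : ℂ) (M : ℝ)
    (hM : ∀ x ∈ Icc (0:ℝ) 1, ‖φ (k^2) x‖ ≤ M * Real.exp (|k.im| * x)) :
    ∀ x ∈ Icc (0:ℝ) 1, ‖k * φ (k^2) x - Complex.sin (k * x)‖ ≤ Q * M * Real.exp (|k.im| * x) := by
  intro x hx
  rw [h.duhamel hq k x hx]
  have hQ0 : 0 ≤ Q := (abs_nonneg _).trans (hQ 0 ⟨le_rfl, zero_le_one⟩)
  have hM0 : 0 ≤ M := by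
    have := (norm_nonneg _).trans (hM 0 ⟨le_rfl, zero_le_one⟩)
    simpa using this
  have := intervalIntegral.norm_integral_le_of_norm_le_const (a := 0) (b := x)
    (f := fun t : ℝ => Complex.sin (k * (x - t)) * (q t * φ (k^2) t))
    (C := Q * M * Real.exp (|k.im| * x)) (by
      intro t ht
      rw [uIoc_of_le hx.1] at ht
      have ht' : t ∈ Icc (0:ℝ) 1 := ⟨ht.1.le, ht.2.trans hx.2⟩
      rw [norm_mul, norm_mul]
      have h1 : ‖Complex.sin (k * (x - t))‖ ≤ Real.exp (|k.im| * (x - t)) := by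
        refine (SL_norm_sin _).trans (le_of_eq ?_)
        congr 1
        have : (k * ((x:ℂ) - t)).im = k.im * (x - t) := by
          rw [← Complex.ofReal_sub, Complex.im_mul_ofReal]
        rw [this, abs_mul, abs_of_nonneg (sub_nonneg.2 ht.2)]
      have h2 : ‖((q t : ℝ) : ℂ)‖ ≤ Q := by
        rw [Complex.norm_real]; exact hQ t ht'
      calc _ ≤ Real.exp (|k.im| * (x - t)) * (Q * (M * Real.exp (|k.im| * t))) := by
            gcongr
            exact hM t ht'
        _ = Q * M * (Real.exp (|k.im| * (x - t)) * Real.exp (|k.im| * t)) := by ring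
        _ = _ := by rw [← Real.exp_add]; congr 2; ring)
  refine this.trans ?_
  rw [sub_zero, abs_of_nonneg hx.1]
  have : 0 ≤ Q * M * Real.exp (|k.im| * x) := by positivity
  nlinarith [hx.2]

lemma SLSol.growth (h : SLSol q φ φ') (hq : ContinuousOn q (Icc 0 1)) (Q : ℝ)
    (hQ : ∀ x ∈ Icc (0:ℝ) 1, |q x| ≤ Q) (k : ℂ) (hk : 2 * Q ≤ ‖k‖) (hk0 : 0 < ‖k‖) :
    ∀ x ∈ Icc (0:ℝ) 1, ‖φ (k^2) x‖ ≤ 2 / ‖k‖ * Real.exp (|k.im| * x) := by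
  have hQ0 : 0 ≤ Q := (abs_nonneg _).trans (hQ 0 ⟨le_rfl, zero_le_one⟩)
  obtain ⟨x₀, hx₀, hmax⟩ := isCompact_Icc.exists_isMaxOn (s := Icc (0:ℝ) 1)
    ⟨0, le_rfl, zero_le_one⟩ (f := fun x => ‖φ (k^2) x‖ * Real.exp (-(|k.im| * x)))
    ((h.contOn (k^2)).norm.mul (by fun_prop))
  set M := ‖φ (k^2) x₀‖ * Real.exp (-(|k.im| * x₀)) with hMdef
  have hM0 : 0 ≤ M := by positivity
  have hM : ∀ x ∈ Icc (0:ℝ) 1, ‖φ (k^2) x‖ ≤ M * Real.exp (|k.im| * x) := by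
    intro x hx
    have h1 : ‖φ (k^2) x‖ * Real.exp (-(|k.im| * x)) ≤ M := hmax hx
    rw [Real.exp_neg, ← div_eq_mul_inv, div_le_iff₀ (Real.exp_pos _)] at h1
    exact h1
  have h2 := h.duhamel_bound hq Q hQ k M hM x₀ hx₀
  have h3 : ‖Complex.sin (k * x₀)‖ ≤ Real.exp (|k.im| * x₀) := by
    refine (SL_norm_sin _).trans (le_of_eq ?_)
    rw [Complex.im_mul_ofReal, abs_mul, abs_of_nonneg hx₀.1]
  have h4 : ‖k‖ * ‖φ (k^2) x₀‖ ≤ (1 + Q * M) * Real.exp (|k.im| * x₀) := by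
    have := norm_add_le (k * φ (k^2) x₀ - Complex.sin (k * x₀)) (Complex.sin (k * x₀))
    rw [sub_add_cancel, norm_mul] at this
    linarith
  have h5 : ‖k‖ * M ≤ 1 + Q * M := by
    have : ‖k‖ * M = ‖k‖ * ‖φ (k^2) x₀‖ * Real.exp (-(|k.im| * x₀)) := by rw [hMdef]; ring
    rw [this, Real.exp_neg, ← div_eq_mul_inv, div_le_iff₀ (Real.exp_pos _)]
    exact h4
  have h6 : M ≤ 2 / ‖k‖ := by
    rw [le_div_iff₀ hk0]
    nlinarith
  intro x hx
  refine (hM x hx).trans ?_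
  gcongr

end
end SL

noncomputable section SL

lemma SL_div (f D : ℂ → ℂ) (hf : Differentiable ℂ f) (hD : Differentiable ℂ D)
    (hs : ∀ l, D l = 0 → deriv D l ≠ 0) (hz : ∀ l, D l = 0 → f l = 0) :
    ∃ h : ℂ → ℂ, Differentiable ℂ h ∧ (∀ l, f l = D l * h l) ∧
      (∀ l, D l = 0 → deriv f l = deriv D l * h l) := by
  classical
  let h : ℂ → ℂ := fun l => if D l = 0 then deriv f l / deriv D l else f l / D l
  refine ⟨h, ?_, ?_, ?_⟩
  · intro l₀
    by_cases h0 : D l₀ = 0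
    · have d1 : Differentiable ℂ (dslope f l₀) := fun x =>
        ((Complex.differentiableOn_dslope univ_mem).2 hf.differentiableOn).differentiableAt univ_mem
      have d2 : Differentiable ℂ (dslope D l₀) := fun x =>
        ((Complex.differentiableOn_dslope univ_mem).2 hD.differentiableOn).differentiableAt univ_mem
      have hne : dslope D l₀ l₀ ≠ 0 := by rw [dslope_same]; exact hs l₀ h0
      have hev : h =ᶠ[𝓝 l₀] fun l => dslope f l₀ l / dslope D l₀ l := by
        filter_upwards [(d2 l₀).continuousAt.eventually_ne hne] with l hl
        by_cases hll : l = l₀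
        · subst hll
          simp [h, h0]
        · have hsub : l - l₀ ≠ 0 := sub_ne_zero.2 hll
          have e1 := sub_smul_dslope f l₀ l
          have e2 := sub_smul_dslope D l₀ l
          rw [hz l₀ h0, sub_zero, smul_eq_mul] at e1
          rw [h0, sub_zero, smul_eq_mul] at e2
          have : D l ≠ 0 := by rw [← e2]; exact mul_ne_zero hsub hl
          simp only [h, this, if_false]
          rw [← e1, ← e2]
          field_simp
      exact ((d1 l₀).div (d2 l₀) hne).congr_of_eventuallyEq hev
    · have hev : h =ᶠ[𝓝 l₀] fun l => f l / D l := by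
        filter_upwards [(hD l₀).continuousAt.eventually_ne h0] with l hl
        simp [h, hl]
      exact ((hf l₀).div (hD l₀) h0).congr_of_eventuallyEq hev
  · intro l
    by_cases h0 : D l = 0
    · rw [h0, hz l h0]; simp
    · simp only [h, h0, if_false]; field_simp
  · intro l h0
    have := hs l h0
    simp only [h, h0, if_true]; field_simp

lemma SL_sin_lower_re (z : ℂ) (h : Real.cos z.re = 0) :
    Real.exp |z.im| / 4 ≤ ‖Complex.sin z‖ := by
  have h1 : |Real.sin z.re| = 1 := by
    have := Real.sin_sq_add_cos_sq z.re
    rw [h] at this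
    have h2 : |Real.sin z.re|^2 = 1 := by rw [sq_abs]; linarith
    nlinarith [abs_nonneg (Real.sin z.re)]
  have h2 : (Complex.sin z).re = Real.sin z.re * Real.cosh z.im := by
    rw [Complex.sin_eq, ← Complex.ofReal_sin, ← Complex.ofReal_cos, ← Complex.ofReal_cosh,
      ← Complex.ofReal_sinh]
    simp only [Complex.add_re, Complex.mul_re, Complex.ofReal_re, Complex.ofReal_im, Complex.I_re,
      Complex.I_im, Complex.mul_im]
    ring
  have h3 := Complex.abs_re_le_norm (Complex.sin z)
  rw [h2, abs_mul, h1, one_mul, abs_of_pos (Real.cosh_pos _), ← Real.cosh_abs, Real.cosh_eq] at h3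
  have := Real.exp_pos (-|z.im|)
  have := Real.exp_pos (|z.im|)
  linarith

lemma SL_sin_lower_im (z : ℂ) (h : 1 ≤ |z.im|) :
    Real.exp |z.im| / 4 ≤ ‖Complex.sin z‖ := by
  have h0 : ‖Complex.sin z‖
      = ‖Complex.exp (-z * Complex.I) - Complex.exp (z * Complex.I)‖ / 2 := by
    rw [Complex.sin, norm_div, norm_mul, Complex.norm_I]; simp
  have h1 : ‖Complex.exp (-z * Complex.I)‖ = Real.exp z.im := by
    rw [Complex.norm_exp]; simp
  have h2 : ‖Complex.exp (z * Complex.I)‖ = Real.exp (-z.im) := by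
    rw [Complex.norm_exp]; simp
  have h3 := abs_norm_sub_norm_le (Complex.exp (-z * Complex.I)) (Complex.exp (z * Complex.I))
  rw [h1, h2] at h3
  have h4 : Real.exp |z.im| - Real.exp (-|z.im|) ≤ |Real.exp z.im - Real.exp (-z.im)| := by
    rcases abs_cases z.im with ⟨h, _⟩ | ⟨h, _⟩ <;> rw [h]
    · exact le_abs_self _
    · rw [neg_neg, abs_sub_comm]; exact le_abs_self _
  have h5 : 2 ≤ Real.exp |z.im| := by
    have := Real.add_one_le_exp |z.im|
    linarith
  have h6 : Real.exp (-|z.im|) ≤ 1 := Real.exp_le_one_iff.2 (by linarith)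
  rw [h0]
  linarith

lemma SL_liouville (H : ℂ → ℂ) (hH : Differentiable ℂ H) (B C : ℝ)
    (hb : ∀ k : ℂ, B ≤ ‖k‖ → 0 < ‖k‖ → Real.exp |k.im| / 4 ≤ ‖Complex.sin k‖ →
      ‖H (k^2)‖ ≤ C / ‖k‖) : ∀ l, H l = 0 := by
  have main : ∀ k : ℂ, H (k^2) = 0 := by
    intro k
    have hC : 0 ≤ |C| := abs_nonneg C
    have hR : Tendsto (fun n : ℕ => ((n:ℝ) + 1/2) * Real.pi) atTop atTop :=
      (tendsto_atTop_add_const_right _ _ tendsto_natCast_atTop_atTop).atTop_mul_const Real.pi_pos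
    have hlim : Tendsto (fun n : ℕ => |C| / (((n:ℝ) + 1/2) * Real.pi)) atTop (𝓝 0) :=
      hR.const_div_atTop _
    have hle : ∀ᶠ n : ℕ in atTop, ‖H (k^2)‖ ≤ |C| / (((n:ℝ) + 1/2) * Real.pi) := by
      filter_upwards [hR.eventually_ge_atTop B, hR.eventually_ge_atTop 1,
        hR.eventually_ge_atTop (‖k‖ + 1)] with n h1 h2 h3
      set R := ((n:ℝ) + 1/2) * Real.pi with hRdef
      have hRpos : 0 < R := by linarith
      have hcos : Real.cos R = 0 := by
        rw [Real.cos_eq_zero_iff]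
        exact ⟨n, by rw [hRdef]; push_cast; ring⟩
      have hbd : Bornology.IsBounded (Ioo (-R) R ×ℂ Ioo (-R) R) :=
        (Metric.isBounded_Ioo _ _).reProdIm (Metric.isBounded_Ioo _ _)
      apply Complex.norm_le_of_forall_mem_frontier_norm_le (f := fun k => H (k^2)) hbd
      · exact (hH.comp (differentiable_pow 2)).diffContOnCl
      · intro z hz
        rw [Complex.frontier_reProdIm, closure_Ioo (by linarith), frontier_Ioo (by linarith)] at hz
        have key : R ≤ ‖z‖ ∧ Real.exp |z.im| / 4 ≤ ‖Complex.sin z‖ := by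
          rcases hz with hz | hz
          · have hzi : |z.im| = R := by
              rcases hz.2 with h | h
              · have h : z.im = -R := h
                rw [h, abs_neg, abs_of_pos hRpos]
              · have h : z.im = R := h
                rw [h, abs_of_pos hRpos]
            exact ⟨hzi ▸ Complex.abs_im_le_norm z, SL_sin_lower_im z (by rw [hzi]; exact h2)⟩
          · have hzi : |z.re| = R := by
              rcases hz.1 with h | h
              · have h : z.re = -R := h
                rw [h, abs_neg, abs_of_pos hRpos]
              · have h : z.re = R := h
                rw [h, abs_of_pos hRpos]
            exact ⟨hzi ▸ Complex.abs_re_le_norm z,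
              SL_sin_lower_re z (by rw [← Real.cos_abs, hzi]; exact hcos)⟩
        have hz0 : 0 < ‖z‖ := by linarith [key.1]
        refine (hb z (h1.trans key.1) hz0 key.2).trans ?_
        calc C / ‖z‖ ≤ |C| / ‖z‖ := by gcongr; exact le_abs_self C
          _ ≤ |C| / R := by gcongr; exact key.1
      · apply subset_closure
        have a1 := abs_lt.1 (lt_of_le_of_lt (Complex.abs_re_le_norm k) (by linarith : ‖k‖ < R))
        have a2 := abs_lt.1 (lt_of_le_of_lt (Complex.abs_im_le_norm k) (by linarith : ‖k‖ < R))
        exact ⟨a1, a2⟩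
    have := ge_of_tendsto hlim hle
    exact norm_le_zero_iff.1 this
  intro l
  obtain ⟨k, hk⟩ := IsAlgClosed.exists_pow_nat_eq l two_pos
  rw [← hk]
  exact main k

section
variable {q : ℝ → ℝ} {φ φ' : ℂ → ℝ → ℂ}

lemma SLSol.im_zero (h : SLSol q φ φ') (hq : ContinuousOn q (Icc 0 1)) (t : ℝ) :
    ∀ x ∈ Icc (0:ℝ) 1, (φ t x).im = 0 ∧ (φ' t x).im = 0 := by
  intro x hx
  have := h.conj hq t x hx
  have e : star (t:ℂ) = t := Complex.conj_ofReal t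
  rw [e] at this
  exact ⟨Complex.conj_eq_iff_im.1 this.1.symm, Complex.conj_eq_iff_im.1 this.2.symm⟩

lemma SLSol.re_d1 (h : SLSol q φ φ') (t : ℝ) :
    ∀ x ∈ Icc (0:ℝ) 1, HasDerivAt (fun x => (φ t x).re) (φ' t x).re x := by
  intro x hx
  exact Complex.reCLM.hasFDerivAt.comp_hasDerivAt x (h.d1 t x hx)

lemma SLSol.re_d2 (h : SLSol q φ φ') (t : ℝ) :
    ∀ x ∈ Icc (0:ℝ) 1, HasDerivAt (fun x => (φ' t x).re) ((q x - t) * (φ t x).re) x := by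
  intro x hx
  refine HasDerivAt.congr_deriv (Complex.reCLM.hasFDerivAt.comp_hasDerivAt x (h.d2 t x hx)) ?_
  rw [← Complex.ofReal_sub]
  simp

lemma SLSol.eig_iff (h : SLSol q φ φ') (hq : ContinuousOn q (Icc 0 1)) (t : ℝ) :
    IsDirichletEigenvalue q t ↔ φ t 1 = 0 := by
  constructor
  · rintro ⟨ψ, ψ', d1, d2, ⟨c, hc, hc'⟩, h0, h1⟩
    have := SL_uniq (fun x => (q x : ℂ) - t)
      ((Complex.continuous_ofReal.comp_continuousOn hq).sub continuousOn_const)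
      (fun x => (ψ x : ℂ) - ψ' 0 * φ t x) (fun x => (ψ' x : ℂ) - ψ' 0 * φ' t x)
      (fun x hx => (d1 x hx).ofReal_comp.sub ((h.d1 t x hx).const_mul _))
      (fun x hx => by
        refine HasDerivAt.congr_deriv
          ((d2 x hx).ofReal_comp.sub ((h.d2 t x hx).const_mul _)) ?_
        push_cast
        ring)
      (by simp [h0, h.z0]) (by simp [h.z1])
    have e1 := (this 1 ⟨zero_le_one, le_rfl⟩).1
    have e2 := (this c hc).1
    simp only [h1, Complex.ofReal_zero, zero_sub, neg_eq_zero, mul_eq_zero] at e1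
    rcases e1 with e1 | e1
    · simp only [e1, zero_mul, sub_zero, Complex.ofReal_eq_zero] at e2
      exact absurd e2 hc'
    · exact e1
  · intro h1
    refine ⟨fun x => (φ t x).re, fun x => (φ' t x).re, h.re_d1 t, ?_, ?_, ?_, ?_⟩
    · intro x hx
      exact (h.re_d2 t x hx).congr_deriv (by ring)
    · obtain ⟨c, hc, hc'⟩ := h.ne_zero t 1 one_pos
      refine ⟨c, hc, fun h0 => hc' ?_⟩
      exact Complex.ext h0 (h.im_zero hq t c hc).1
    · simp [h.z0]
    · simp [h1]

lemma SLSol.pos (h : SLSol q φ φ') (hq : ContinuousOn q (Icc 0 1)) (K : ℝ)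
    (hK : ∀ x ∈ Icc (0:ℝ) 1, |q x| ≤ K) (x : ℝ) (hx : x ∈ Ioc (0:ℝ) 1) :
    0 < (φ ((-K : ℝ) : ℂ) x).re := by
  set t : ℝ := -K with ht
  set u : ℝ → ℝ := fun x => (φ t x).re with hu
  set u' : ℝ → ℝ := fun x => (φ' t x).re with hu'
  have d1 : ∀ x ∈ Icc (0:ℝ) 1, HasDerivAt u (u' x) x := h.re_d1 t
  have d2 : ∀ x ∈ Icc (0:ℝ) 1, HasDerivAt u' ((q x - t) * u x) x := h.re_d2 t
  have hmono1 : MonotoneOn (fun x => u x * u' x) (Icc 0 1) := by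
    apply monotoneOn_of_hasDerivWithinAt_nonneg (convex_Icc 0 1)
      (f' := fun x => u' x * u' x + u x * ((q x - t) * u x))
    · exact fun x hx => ((d1 x hx).mul (d2 x hx)).continuousAt.continuousWithinAt
    · exact fun x hx => ((d1 x (interior_subset hx)).mul
        (d2 x (interior_subset hx))).hasDerivWithinAt
    · intro x hx
      have := (abs_le.1 (hK x (interior_subset hx))).1
      have h2 : 0 ≤ q x - t := by rw [ht]; linarith
      have : 0 ≤ (q x - t) * (u x)^2 := by positivity
      nlinarith [mul_self_nonneg (u' x)]
  have hu0 : u 0 = 0 := by simp [hu, h.z0]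
  have hu'0 : u' 0 = 1 := by simp [hu', h.z1]
  have hnn : ∀ x ∈ Icc (0:ℝ) 1, 0 ≤ u x * u' x := by
    intro x hx
    have := hmono1 ⟨le_rfl, zero_le_one⟩ hx hx.1
    simpa [hu0] using this
  have hmono2 : MonotoneOn (fun x => u x * u x) (Icc 0 1) := by
    apply monotoneOn_of_hasDerivWithinAt_nonneg (convex_Icc 0 1)
      (f' := fun x => u' x * u x + u x * u' x)
    · exact fun x hx => ((d1 x hx).mul (d1 x hx)).continuousAt.continuousWithinAt
    · exact fun x hx => ((d1 x (interior_subset hx)).mul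
        (d1 x (interior_subset hx))).hasDerivWithinAt
    · intro x hx
      have := hnn x (interior_subset hx)
      linarith
  have hne : ∀ x ∈ Ioc (0:ℝ) 1, u x ≠ 0 := by
    intro x hx h0
    obtain ⟨c, hc, hc'⟩ := h.ne_zero t x hx.1
    have hc1 : c ∈ Icc (0:ℝ) 1 := ⟨hc.1, hc.2.trans hx.2⟩
    have := hmono2 hc1 ⟨hx.1.le, hx.2⟩ hc.2
    simp only [h0, mul_zero] at this
    have huc : u c = 0 := by nlinarith [mul_self_nonneg (u c)]
    exact hc' (Complex.ext huc (h.im_zero hq t c hc1).1)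
  by_contra hneg
  have hux : u x < 0 := lt_of_le_of_ne (not_lt.1 hneg) (hne x hx)
  have hev : ∀ᶠ y in 𝓝[>] (0:ℝ), 0 < u' y := by
    have := (d2 0 ⟨le_rfl, zero_le_one⟩).continuousAt.eventually (lt_mem_nhds
      (show (0:ℝ) < u' 0 by rw [hu'0]; exact one_pos))
    exact this.filter_mono nhdsWithin_le_nhds
  obtain ⟨c, hc, hcx⟩ := (hev.and (Ioc_mem_nhdsGT hx.1)).exists
  have hc1 : c ∈ Icc (0:ℝ) 1 := ⟨hcx.1.le, hcx.2.trans hx.2⟩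
  have hcne := hne c ⟨hcx.1, hc1.2⟩
  have hcpos : 0 < u c := by
    have := hnn c hc1
    have : 0 ≤ u c := nonneg_of_mul_nonneg_left this hc
    exact lt_of_le_of_ne this (Ne.symm hcne)
  have hivt := intermediate_value_Icc' hcx.2 (f := u)
    (fun y hy => (d1 y ⟨hc1.1.trans hy.1, hy.2.trans hx.2⟩).continuousAt.continuousWithinAt)
  obtain ⟨y, hy, hy0⟩ := hivt ⟨hux.le, hcpos.le⟩
  exact hne y ⟨hcx.1.trans_le hy.1, hy.2.trans hx.2⟩ hy0

end
end SL

noncomputable section SL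

section
variable {q1 q2 : ℝ → ℝ} {φ1 φ1' φ2 φ2' : ℂ → ℝ → ℂ}

lemma SLSol.deriv_ne {q : ℝ → ℝ} {φ φ' : ℂ → ℝ → ℂ} (h : SLSol q φ φ')
    (hq : ContinuousOn q (Icc 0 1)) (l : ℂ) (hl : φ l 1 = 0) :
    deriv (fun m => φ m 1) l ≠ 0 := by
  obtain ⟨c, hc, e⟩ := h.deriv_zero hq l hl
  intro h0
  rw [h0, mul_zero] at e
  have : c = 0 := by exact_mod_cast e.symm
  exact hc.ne' this

/-- The parities of the eigenfunctions agree. -/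
lemma SL_parity (h1 : SLSol q1 φ1 φ1') (h2 : SLSol q2 φ2 φ2')
    (hq1 : ContinuousOn q1 (Icc 0 1)) (hq2 : ContinuousOn q2 (Icc 0 1))
    (hs1 : ∀ x ∈ Icc (0:ℝ) 1, q1 (1 - x) = q1 x) (hs2 : ∀ x ∈ Icc (0:ℝ) 1, q2 (1 - x) = q2 x)
    (K : ℝ) (hK1 : ∀ x ∈ Icc (0:ℝ) 1, |q1 x| ≤ K) (hK2 : ∀ x ∈ Icc (0:ℝ) 1, |q2 x| ≤ K)
    (hz : ∀ l, φ1 l 1 = 0 ↔ φ2 l 1 = 0) (l : ℂ) (hl : φ1 l 1 = 0) :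
    φ1' l 1 = φ2' l 1 := by
  have m1 : (1:ℝ) ∈ Icc (0:ℝ) 1 := ⟨zero_le_one, le_rfl⟩
  obtain ⟨R, hR, hR1, hR2⟩ := SL_div (fun l => φ1 l 1) (fun l => φ2 l 1) (h1.hol 1 m1)
    (h2.hol 1 m1) (fun l hl => h2.deriv_ne hq2 l hl) (fun l hl => (hz l).2 hl)
  have hne : ∀ l, R l ≠ 0 := by
    intro l h0
    by_cases hl : φ2 l 1 = 0
    · have := hR2 l hl
      rw [h0, mul_zero] at this
      exact h1.deriv_ne hq1 l ((hz l).2 hl) this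
    · have := hR1 l
      rw [h0, mul_zero] at this
      exact hl ((hz l).1 this)
  -- value at zeros
  have hval : ∀ l, φ1 l 1 = 0 → ∃ c : ℝ, 0 < c ∧ R l = c * (φ1' l 1 * φ2' l 1) := by
    intro l hl
    obtain ⟨c1, hc1, e1⟩ := h1.deriv_zero hq1 l hl
    obtain ⟨c2, hc2, e2⟩ := h2.deriv_zero hq2 l ((hz l).1 hl)
    have s1 := (h1.refl hq1 hs1 l hl).1
    have s2 := (h2.refl hq2 hs2 l ((hz l).1 hl)).1
    refine ⟨c1 / c2, by positivity, ?_⟩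
    have e3 := hR2 l ((hz l).1 hl)
    have hc2' : (c2 : ℂ) ≠ 0 := by exact_mod_cast hc2.ne'
    have e4 : (c1 : ℂ) * φ1' l 1 = c2 * φ2' l 1 * R l := by
      rw [← e1, ← e2]
      linear_combination (s1 * deriv (fun m => φ1 m 1) l) + e3
        - (s2 * deriv (fun m => φ2 m 1) l * R l)
    push_cast
    field_simp
    linear_combination (- φ2' l 1) * e4 - c2 * R l * s2
  have hpm : ∀ l, φ1 l 1 = 0 → φ1' l 1 * φ2' l 1 = 1 ∨ φ1' l 1 * φ2' l 1 = -1 := by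
    intro l hl
    have s1 := (h1.refl hq1 hs1 l hl).1
    have s2 := (h2.refl hq2 hs2 l ((hz l).1 hl)).1
    apply mul_self_eq_one_iff.1
    linear_combination (φ2' l 1)^2 * s1 + s2
  have hreal : ∀ t : ℝ, (R t).im = 0 := by
    intro t
    by_cases hl : φ1 t 1 = 0
    · obtain ⟨c, hc, e⟩ := hval t hl
      rw [e]
      rcases hpm t hl with h | h <;> rw [h] <;> simp
    · have hl2 : φ2 t 1 ≠ 0 := fun h => hl ((hz t).2 h)
      have e := hR1 t
      have i1 := (h1.im_zero hq1 t 1 m1).1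
      have i2 := (h2.im_zero hq2 t 1 m1).1
      have e' := congrArg Complex.im e
      rw [i1, Complex.mul_im, i2, zero_mul, add_zero] at e'
      rcases mul_eq_zero.1 e'.symm with h | h
      · exact absurd (Complex.ext h i2) hl2
      · exact h
  have hrne : ∀ t : ℝ, (R t).re ≠ 0 := fun t h => hne t (Complex.ext h (hreal t))
  have hK : 0 < (R ((-K : ℝ) : ℂ)).re := by
    have p1 := h1.pos hq1 K hK1 1 ⟨one_pos, le_rfl⟩
    have p2 := h2.pos hq2 K hK2 1 ⟨one_pos, le_rfl⟩
    have e := congrArg Complex.re (hR1 ((-K : ℝ) : ℂ))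
    rw [Complex.mul_re, hreal, mul_zero, sub_zero] at e
    rw [e] at p1
    exact (pos_iff_pos_of_mul_pos p1).1 p2
  have hcont : Continuous fun t : ℝ => (R t).re :=
    Complex.continuous_re.comp (hR.continuous.comp Complex.continuous_ofReal)
  have hpos : ∀ t : ℝ, 0 < (R t).re := by
    intro t
    by_contra hn
    obtain ⟨s, hs⟩ := mem_range_of_exists_le_of_exists_ge hcont ⟨t, not_lt.1 hn⟩ ⟨-K, hK.le⟩
    exact hrne s hs
  -- conclusion
  have hlr : ((l.re : ℝ) : ℂ) = l := Complex.conj_eq_iff_re.1 (h1.zero_real hq1 l hl)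
  have s2 := (h2.refl hq2 hs2 l ((hz l).1 hl)).1
  obtain ⟨c, hc, e⟩ := hval l hl
  rcases hpm l hl with h | h
  · linear_combination φ2' l 1 * h - φ1' l 1 * s2
  · exfalso
    have := hpos l.re
    rw [hlr, e, h] at this
    simp at this
    linarith

/-- The key identity `φ₁(x) φ₂(1-x) = φ₁(1-x) φ₂(x)`. -/
lemma SL_key (h1 : SLSol q1 φ1 φ1') (h2 : SLSol q2 φ2 φ2')
    (hq1 : ContinuousOn q1 (Icc 0 1)) (hq2 : ContinuousOn q2 (Icc 0 1))
    (hs1 : ∀ x ∈ Icc (0:ℝ) 1, q1 (1 - x) = q1 x) (hs2 : ∀ x ∈ Icc (0:ℝ) 1, q2 (1 - x) = q2 x)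
    (K : ℝ) (hK1 : ∀ x ∈ Icc (0:ℝ) 1, |q1 x| ≤ K) (hK2 : ∀ x ∈ Icc (0:ℝ) 1, |q2 x| ≤ K)
    (hz : ∀ l, φ1 l 1 = 0 ↔ φ2 l 1 = 0) (x : ℝ) (hx : x ∈ Icc (0:ℝ) 1) (l : ℂ) :
    φ1 l x * φ2 l (1 - x) = φ1 l (1 - x) * φ2 l x := by
  have m1 : (1:ℝ) ∈ Icc (0:ℝ) 1 := ⟨zero_le_one, le_rfl⟩
  have hx' : 1 - x ∈ Icc (0:ℝ) 1 := ⟨by linarith [hx.2], by linarith [hx.1]⟩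
  have hK0 : 0 ≤ K := (abs_nonneg _).trans (hK1 1 m1)
  obtain ⟨H, hH, hH1, -⟩ := SL_div (fun l => φ1 l x * φ2 l (1 - x) - φ1 l (1 - x) * φ2 l x)
    (fun l => φ1 l 1)
    (((h1.hol x hx).mul (h2.hol _ hx')).sub ((h1.hol _ hx').mul (h2.hol x hx)))
    (h1.hol 1 m1) (fun l hl => h1.deriv_ne hq1 l hl) (by
      intro l hl
      have e1 := (h1.refl hq1 hs1 l hl).2 x hx
      have e2 := (h2.refl hq2 hs2 l ((hz l).1 hl)).2 x hx
      have e3 := SL_parity h1 h2 hq1 hq2 hs1 hs2 K hK1 hK2 hz l hl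
      rw [e1, e2, e3]
      ring)
  have hzero := SL_liouville H hH (16 * K) 64 (by
    intro k hk hk0 hsin
    set E := Real.exp |k.im| with hE
    have hEpos : 0 < E := Real.exp_pos _
    have g1 := h1.growth hq1 K hK1 k (by linarith) hk0
    have g2 := h2.growth hq2 K hK2 k (by linarith) hk0
    have hprod : ∀ y ∈ Icc (0:ℝ) 1, 1 - y ∈ Icc (0:ℝ) 1 →
        ‖φ1 (k^2) y * φ2 (k^2) (1 - y)‖ ≤ 4 / ‖k‖^2 * E := by
      intro y hy hy'
      rw [norm_mul]
      calc _ ≤ (2 / ‖k‖ * Real.exp (|k.im| * y)) * (2 / ‖k‖ * Real.exp (|k.im| * (1 - y))) := by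
            gcongr
            · exact g1 y hy
            · exact g2 _ hy'
        _ = 4 / ‖k‖^2 * (Real.exp (|k.im| * y) * Real.exp (|k.im| * (1 - y))) := by
            field_simp; norm_num
        _ = 4 / ‖k‖^2 * E := by rw [← Real.exp_add]; congr 2; ring
    have hN : ‖φ1 (k^2) x * φ2 (k^2) (1 - x) - φ1 (k^2) (1 - x) * φ2 (k^2) x‖
        ≤ 8 / ‖k‖^2 * E := by
      have a1 := hprod x hx hx'
      have a2 := hprod (1 - x) hx' (by rwa [sub_sub_cancel])
      rw [sub_sub_cancel] at a2
      refine (norm_sub_le _ _).trans ?_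
      have : 8 / ‖k‖^2 * E = 4 / ‖k‖^2 * E + 4 / ‖k‖^2 * E := by ring
      linarith
    have hD : E / 8 ≤ ‖k‖ * ‖φ1 (k^2) 1‖ := by
      have b := h1.duhamel_bound hq1 K hK1 k _ g1 1 m1
      simp only [Complex.ofReal_one, mul_one] at b
      rw [← norm_mul]
      have c : K * (2 / ‖k‖) ≤ 1 / 8 := by
        rw [← mul_div_assoc, div_le_iff₀ hk0]; linarith
      have d := norm_sub_norm_le (Complex.sin k) (k * φ1 (k^2) 1)
      rw [norm_sub_rev] at b
      have : K * (2 / ‖k‖) * E ≤ 1 / 8 * E := by gcongr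
      rw [← hE] at b
      linarith
    rw [hH1, norm_mul] at hN
    have hHn := norm_nonneg (H (k^2))
    rw [le_div_iff₀ hk0]
    have s1 : E / 8 * ‖H (k^2)‖ ≤ ‖k‖ * (8 / ‖k‖^2 * E) := by
      calc _ ≤ ‖k‖ * ‖φ1 (k^2) 1‖ * ‖H (k^2)‖ := by gcongr
        _ = ‖k‖ * (‖φ1 (k^2) 1‖ * ‖H (k^2)‖) := by ring
        _ ≤ _ := by gcongr
    have s2 : ‖k‖ * (8 / ‖k‖^2 * E) = 8 * E / ‖k‖ := by field_simp
    rw [s2, le_div_iff₀ hk0] at s1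
    have : E * (‖H (k^2)‖ * ‖k‖) ≤ E * 64 := by linarith
    exact le_of_mul_le_mul_left this hEpos)
  have := hH1 l
  rw [hzero l, mul_zero] at this
  exact sub_eq_zero.1 this

lemma SL_final (h1 : SLSol q1 φ1 φ1') (h2 : SLSol q2 φ2 φ2')
    (hq1 : ContinuousOn q1 (Icc 0 1)) (hq2 : ContinuousOn q2 (Icc 0 1))
    (hs1 : ∀ x ∈ Icc (0:ℝ) 1, q1 (1 - x) = q1 x) (hs2 : ∀ x ∈ Icc (0:ℝ) 1, q2 (1 - x) = q2 x)
    (K : ℝ) (hK1 : ∀ x ∈ Icc (0:ℝ) 1, |q1 x| ≤ K) (hK2 : ∀ x ∈ Icc (0:ℝ) 1, |q2 x| ≤ K)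
    (hz : ∀ l, φ1 l 1 = 0 ↔ φ2 l 1 = 0) (x : ℝ) (hx : x ∈ Ioo (0:ℝ) 1) : q1 x = q2 x := by
  have key := fun x hx => SL_key h1 h2 hq1 hq2 hs1 hs2 K hK1 hK2 hz x hx ((-K : ℝ) : ℂ)
  have w1 := h1.wronsk_refl hs1 ((-K : ℝ) : ℂ)
  have w2 := h2.wronsk_refl hs2 ((-K : ℝ) : ℂ)
  have p1 := h1.pos hq1 K hK1
  have p2 := h2.pos hq2 K hK2
  have D1 := h1.re_d1 (-K)
  have D1' := h1.re_d2 (-K)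
  have D2 := h2.re_d1 (-K)
  have D2' := h2.re_d2 (-K)
  have i1 := h1.im_zero hq1 (-K)
  have i2 := h2.im_zero hq2 (-K)
  set l : ℂ := ((-K : ℝ) : ℂ) with hl
  have hm : ∀ x ∈ Ioo (0:ℝ) 1, 1 - x ∈ Ioo (0:ℝ) 1 := fun x hx =>
    ⟨by linarith [hx.2], by linarith [hx.1]⟩
  have hI : ∀ x ∈ Ioo (0:ℝ) 1, x ∈ Icc (0:ℝ) 1 := fun x hx => ⟨hx.1.le, hx.2.le⟩
  -- squared identity
  have hsq : ∀ x ∈ Ioo (0:ℝ) 1, φ1 l 1 * (φ2 l x)^2 = φ2 l 1 * (φ1 l x)^2 := by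
    intro x hx
    have hxc := hI x hx
    have hmc := hI _ (hm x hx)
    have hk := key x hxc
    have hder1 := ((h1.d1 l x hxc).mul ((h2.d1 l _ hmc).comp_const_sub 1 x))
    have hder2 := (((h1.d1 l _ hmc).comp_const_sub 1 x).mul (h2.d1 l x hxc))
    have hev : (φ1 l * fun x => φ2 l (1 - x)) =ᶠ[𝓝 x] ((fun x => φ1 l (1 - x)) * φ2 l) := by
      filter_upwards [Ioo_mem_nhds hx.1 hx.2] with y hy
      exact key y (hI y hy)
    have hd := (hder1.congr_of_eventuallyEq hev.symm).unique hder2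
    rw [← w1 x hxc, ← w2 x hxc]
    linear_combination (φ1 l x * φ2 l x) * hd
      - (φ1' l x * φ2 l x + φ1 l x * φ2' l x) * hk
  have hr1 : ∀ x ∈ Icc (0:ℝ) 1, φ1 l x = ((φ1 l x).re : ℂ) := fun x hx =>
    Complex.ext (by simp) (by simp [(i1 x hx).1])
  have hr2 : ∀ x ∈ Icc (0:ℝ) 1, φ2 l x = ((φ2 l x).re : ℂ) := fun x hx =>
    Complex.ext (by simp) (by simp [(i2 x hx).1])
  have m1 : (1:ℝ) ∈ Icc (0:ℝ) 1 := ⟨zero_le_one, le_rfl⟩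
  have P1 := p1 1 ⟨one_pos, le_rfl⟩
  have P2 := p2 1 ⟨one_pos, le_rfl⟩
  set c := Real.sqrt ((φ1 l 1).re / (φ2 l 1).re) with hc
  have hprop : ∀ x ∈ Ioo (0:ℝ) 1, (φ1 l x).re = c * (φ2 l x).re := by
    intro x hx
    have e := hsq x hx
    rw [hr1 x (hI x hx), hr2 x (hI x hx), hr1 1 m1, hr2 1 m1] at e
    have e' : (φ1 l 1).re * (φ2 l x).re^2 = (φ2 l 1).re * (φ1 l x).re^2 := by exact_mod_cast e
    have q1p := p1 x ⟨hx.1, hx.2.le⟩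
    have q2p := p2 x ⟨hx.1, hx.2.le⟩
    have hc2 : c^2 = (φ1 l 1).re / (φ2 l 1).re := Real.sq_sqrt (by positivity)
    have hc0 : 0 ≤ c := Real.sqrt_nonneg _
    apply (sq_eq_sq₀ q1p.le (by positivity)).1
    rw [mul_pow, hc2]
    field_simp
    linarith
  have hder : ∀ x ∈ Ioo (0:ℝ) 1, (φ1' l x).re = c * (φ2' l x).re := by
    intro x hx
    have hev : (fun x => (φ1 l x).re) =ᶠ[𝓝 x] fun x => c * (φ2 l x).re := by
      filter_upwards [Ioo_mem_nhds hx.1 hx.2] with y hy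
      exact hprop y hy
    exact (D1 x (hI x hx)).unique
      (((D2 x (hI x hx)).const_mul c).congr_of_eventuallyEq hev)
  have hev : (fun x => (φ1' l x).re) =ᶠ[𝓝 x] fun x => c * (φ2' l x).re := by
    filter_upwards [Ioo_mem_nhds hx.1 hx.2] with y hy
    exact hder y hy
  have e := (D1' x (hI x hx)).unique
    (((D2' x (hI x hx)).const_mul c).congr_of_eventuallyEq hev)
  have e2 := hprop x hx
  have q1p := p1 x ⟨hx.1, hx.2.le⟩
  have e3 : (q1 x - q2 x) * (φ1 l x).re = 0 := by
    linear_combination e - (q2 x - -K) * e2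
  exact sub_eq_zero.1 ((mul_eq_zero.1 e3).resolve_right q1p.ne')

end

lemma SL_exists_on (q : ℝ → ℝ) (hq : ContinuousOn q (Icc 0 1)) : ∃ φ φ', SLSol q φ φ' := by
  obtain ⟨φ, φ', h⟩ := SL_exists (IccExtend (zero_le_one' ℝ) ((Icc (0:ℝ) 1).domRestrict q))
    (continuousOn_iff_continuous_domRestrict.1 hq).Icc_extend'
  refine ⟨φ, φ', ⟨h.d1, ?_, h.z0, h.z1, h.hol, h.cont⟩⟩
  intro l x hx
  have := h.d2 l x hx
  rwa [IccExtend_of_mem _ _ hx] at this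

lemma SL_sym (q : ℝ → ℝ) (hsym : ∀ x ∈ Icc (0:ℝ) (1/2), q (1/2 + x) = q (1/2 - x)) :
    ∀ x ∈ Icc (0:ℝ) 1, q (1 - x) = q x := by
  intro x hx
  rcases le_total x (1/2) with h | h
  · have := hsym (1/2 - x) ⟨by linarith, by linarith [hx.1]⟩
    rw [show (1/2 + (1/2 - x) : ℝ) = 1 - x by ring, show (1/2 - (1/2 - x) : ℝ) = x by ring] at this
    exact this
  · have := hsym (x - 1/2) ⟨by linarith, by linarith [hx.2]⟩
    rw [show (1/2 + (x - 1/2) : ℝ) = x by ring, show (1/2 - (x - 1/2) : ℝ) = 1 - x by ring] at this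
    exact this.symm

end SL

/-- two continuous potentials, both symmetric about `x = 1/2`, with the
same set of Dirichlet eigenvalues, coincide on `[0,1]`. -/
theorem spectrum_determines_symmetric_potential
    (q1 q2 : ℝ → ℝ)
    (hq1 : ContinuousOn q1 (Set.Icc 0 1)) (hq2 : ContinuousOn q2 (Set.Icc 0 1))
    (hsym1 : ∀ x ∈ Set.Icc (0:ℝ) (1/2), q1 (1/2 + x) = q1 (1/2 - x))
    (hsym2 : ∀ x ∈ Set.Icc (0:ℝ) (1/2), q2 (1/2 + x) = q2 (1/2 - x))
    (hspec : {lam : ℝ | IsDirichletEigenvalue q1 lam}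
        = {lam : ℝ | IsDirichletEigenvalue q2 lam}) :
    ∀ x ∈ Set.Icc (0:ℝ) 1, q1 x = q2 x := by
  obtain ⟨φ1, φ1', h1⟩ := SL_exists_on q1 hq1
  obtain ⟨φ2, φ2', h2⟩ := SL_exists_on q2 hq2
  have hs1 := SL_sym q1 hsym1
  have hs2 := SL_sym q2 hsym2
  obtain ⟨K1, hK1⟩ := isCompact_Icc.exists_bound_of_continuousOn hq1
  obtain ⟨K2, hK2⟩ := isCompact_Icc.exists_bound_of_continuousOn hq2
  have hsp : ∀ t : ℝ, φ1 t 1 = 0 ↔ φ2 t 1 = 0 := by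
    intro t
    rw [← h1.eig_iff hq1, ← h2.eig_iff hq2]
    exact Set.ext_iff.1 hspec t
  have hz : ∀ l, φ1 l 1 = 0 ↔ φ2 l 1 = 0 := by
    intro l
    constructor
    · intro hl
      have hlr : ((l.re : ℝ) : ℂ) = l := Complex.conj_eq_iff_re.1 (h1.zero_real hq1 l hl)
      rw [← hlr] at hl ⊢
      exact (hsp _).1 hl
    · intro hl
      have hlr : ((l.re : ℝ) : ℂ) = l := Complex.conj_eq_iff_re.1 (h2.zero_real hq2 l hl)
      rw [← hlr] at hl ⊢
      exact (hsp _).2 hl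
  have hEq : EqOn q1 q2 (Ioo 0 1) := fun x hx =>
    SL_final h1 h2 hq1 hq2 hs1 hs2 (max K1 K2)
      (fun x hx => (hK1 x hx).trans (le_max_left _ _))
      (fun x hx => (hK2 x hx).trans (le_max_right _ _)) hz x hx
  exact hEq.of_subset_closure hq1 hq2 Ioo_subset_Icc_self
    (by rw [closure_Ioo (zero_ne_one' ℝ)])
end
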